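/- arXiv:1306.0767 — 7 statements merged into one kernel-verified Lean document; each statement's English description precedes it below -/
import Mathlib

section
/- Let n ≥ 9 be a natural number and let G be either the alternating group Alt_n or the symmetric group Sym_n. Then the proportion of elements x ∈ G of even order such that the power x^(|x|/2) moves at most 4√n/3 points is at least 1/(13 log n). (Here |x| denotes the order of x and log is the natural logarithm.) -/
open Equiv Equiv.Perm Finset in
theorem ssi_two_mul_card_sign {α : Type*} [Fintype α] [DecidableEq α] (s : ℤˣ)
    (h : 2 ≤ Fintype.card α) :
    2 * (univ.filter (fun y : Perm α => sign y = s)).card = (Fintype.card α).factorial := by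
  have : Nontrivial α := Fintype.one_lt_card_iff_nontrivial.mp h
  have key : ∀ s : ℤˣ, (univ.filter (fun y : Perm α => sign y = s)).card
      = (univ.filter (fun y : Perm α => sign y = 1)).card := by
    intro s
    obtain ⟨g, hg⟩ := Equiv.Perm.sign_surjective α s
    symm
    apply Finset.card_bij (fun y _ => g * y)
    · intro a ha
      simp at ha ⊢
      simp [ha, hg]
    · intro a _ b _ hab
      simpa using hab
    · intro b hb
      refine ⟨g⁻¹ * b, ?_, by simp⟩
      simp at hb ⊢
      simp [hb, hg]
  have h1 := Finset.card_filter_add_card_filter_not (s := (univ : Finset (Perm α)))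
    (fun y => sign y = 1)
  have h2 : (univ.filter (fun y : Perm α => ¬ sign y = 1))
      = (univ.filter (fun y : Perm α => sign y = -1)) := by
    ext y
    rcases Int.units_eq_one_or (sign y) with h | h <;> simp [h]
  rw [h2, key (-1), Finset.card_univ, Fintype.card_perm] at h1
  rw [key s]
  omega

open Equiv Equiv.Perm Finset in
theorem ssi_card_sign_le {α : Type*} [Fintype α] [DecidableEq α] (s : ℤˣ) :
    ((univ.filter (fun y : Perm α => sign y = s)).card : ℝ)
      ≤ (Fintype.card α).factorial / 2 * (if Fintype.card α ≤ 1 then 2 else 1) := by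
  split_ifs with h
  · have h1 : (univ.filter (fun y : Perm α => sign y = s)).card ≤ (Fintype.card α).factorial := by
      rw [← Fintype.card_perm]
      exact Finset.card_le_univ _
    have : ((univ.filter (fun y : Perm α => sign y = s)).card : ℝ)
      ≤ (Fintype.card α).factorial := by exact_mod_cast h1
    linarith
  · have h1 := ssi_two_mul_card_sign (α := α) s (by omega)
    have : 2 * ((univ.filter (fun y : Perm α => sign y = s)).card : ℝ)
      = (Fintype.card α).factorial := by exact_mod_cast h1
    linarith

open Equiv Equiv.Perm Finset in
theorem ssi_card_cycles {α : Type*} [Fintype α] [DecidableEq α] (l : ℕ) (hl : 2 ≤ l)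
    (h : l ≤ Fintype.card α) :
    ((univ.filter (fun d : Perm α => d.cycleType = {l})).card : ℝ)
      = (Fintype.card α).factorial / (l * (Fintype.card α - l).factorial) := by
  have h1 := Equiv.Perm.card_of_cycleType_mul_eq α {l}
  rw [if_pos ⟨by simpa using h, by simpa using hl⟩] at h1
  simp at h1
  have h2 : ((univ.filter (fun d : Perm α => d.cycleType = {l})).card : ℝ) *
    ((Fintype.card α - l).factorial * l) = (Fintype.card α).factorial := by exact_mod_cast h1
  have : (0:ℝ) < l := by exact_mod_cast (by omega : 0 < l)
  have : (0:ℝ) < (Fintype.card α - l).factorial := by exact_mod_cast Nat.factorial_pos _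
  rw [eq_div_iff (by positivity), ← h2]
  ring

theorem ssi_pow_dvd_lcm (a u v : ℕ) (h : 2 ^ a ∣ Nat.lcm u v) : 2 ^ a ∣ u ∨ 2 ^ a ∣ v := by
  rcases Nat.eq_zero_or_pos u with rfl | hu
  · simp
  rcases Nat.eq_zero_or_pos v with rfl | hv
  · simp
  rw [Nat.Prime.pow_dvd_iff_le_factorization Nat.prime_two (Nat.lcm_ne_zero hu.ne' hv.ne'),
    Nat.factorization_lcm hu.ne' hv.ne'] at h
  rw [Nat.Prime.pow_dvd_iff_le_factorization Nat.prime_two hu.ne',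
    Nat.Prime.pow_dvd_iff_le_factorization Nat.prime_two hv.ne']
  simpa using h

theorem ssi_pow_dvd_multiset_lcm (a : ℕ) (ha : 1 ≤ a) (s : Multiset ℕ) (h : 2 ^ a ∣ s.lcm) :
    ∃ l ∈ s, 2 ^ a ∣ l := by
  induction s using Multiset.induction with
  | empty =>
    simp at h
    omega
  | cons x s ih =>
    rw [Multiset.lcm_cons] at h
    rcases ssi_pow_dvd_lcm a _ _ h with h | h
    · exact ⟨x, by simp, h⟩
    · obtain ⟨l, hl, hd⟩ := ih h
      exact ⟨l, by simp [hl], hd⟩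

open Equiv Equiv.Perm Finset in
theorem ssi_disjoint {α : Type*} [Fintype α] [DecidableEq α] (d : Perm α)
    (y : Perm {x // x ∉ d.support}) : Disjoint d (ofSubtype y) := by
  intro x
  by_cases hx : x ∈ d.support
  · right
    exact ofSubtype_apply_of_not_mem y (by simpa using hx)
  · left
    simpa using hx

open Equiv Equiv.Perm Finset in
theorem ssi_exists_ofSubtype {α : Type*} [Fintype α] [DecidableEq α] (d t : Perm α)
    (h : Disjoint d t) : ∃ z : Perm {x // x ∉ d.support}, ofSubtype z = t := by
  have h2 : ∀ x, t x ≠ x → x ∉ d.support := by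
    intro x hx
    rcases h x with h | h
    · simpa using h
    · exact absurd h hx
  have h1 : ∀ x, t x ∉ d.support ↔ x ∉ d.support := by
    intro x
    by_cases hx : t x = x
    · rw [hx]
    · have h3 := h2 x hx
      have h4 := h2 (t x) (fun h => hx (t.injective h))
      tauto
  exact ⟨t.subtypePerm h1, ofSubtype_subtypePerm h1 h2⟩

open Equiv Equiv.Perm Finset in
theorem ssi_card_compl {α : Type*} [Fintype α] [DecidableEq α] (d : Perm α) (l : ℕ)
    (h : d.cycleType = {l}) :
    Fintype.card {x // x ∉ d.support} = Fintype.card α - l := by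
  have : d.support.card = l := by rw [← sum_cycleType, h]; simp
  rw [Fintype.card_subtype_compl, Fintype.card_coe, this]

open Equiv Equiv.Perm Finset in
theorem ssi_bad_subset {α : Type*} [Fintype α] [DecidableEq α] (s : ℤˣ) (a : ℕ) (ha : 1 ≤ a) :
    (univ.filter (fun y : Perm α => sign y = s ∧ 2 ^ a ∣ orderOf y)) ⊆
      (Icc 1 (Fintype.card α / 2 ^ a)).biUnion (fun k =>
        (univ.filter (fun d : Perm α => d.cycleType = {2 ^ a * k})).biUnion (fun d =>
          (univ.filter (fun z : Perm {x // x ∉ d.support} => sign z = s * sign d)).image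
            (fun z => d * ofSubtype z))) := by
  intro y hy
  simp only [mem_filter, mem_univ, true_and] at hy
  obtain ⟨hs, hm⟩ := hy
  rw [← lcm_cycleType] at hm
  obtain ⟨l, hl, k, rfl⟩ := ssi_pow_dvd_multiset_lcm a ha _ hm
  have hle := le_card_support_of_mem_cycleType hl
  have hle2 := two_le_of_mem_cycleType hl
  have hle3 : y.support.card ≤ Fintype.card α := Finset.card_le_univ _
  obtain ⟨d, t, rfl, hdt, hd, hc⟩ := mem_cycleType_iff.1 hl
  obtain ⟨z, rfl⟩ := ssi_exists_ofSubtype d t hdt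
  simp only [mem_biUnion, mem_filter, mem_univ, true_and, mem_image, mem_Icc]
  refine ⟨k, ⟨?_, ?_⟩, d, ?_, z, ?_, rfl⟩
  · rcases Nat.eq_zero_or_pos k with rfl | h
    · simp at hle2
    · exact h
  · rw [Nat.le_div_iff_mul_le (by positivity), mul_comm]
    omega
  · rw [hd.cycleType, hc]
  · rw [← hs]
    simp only [Perm.sign_mul, sign_ofSubtype]
    rw [mul_comm, ← mul_assoc, Int.units_mul_self, one_mul]

open Equiv Equiv.Perm Finset in
theorem ssi_card_bad_le {α : Type*} [Fintype α] [DecidableEq α] (s : ℤˣ) (a : ℕ) (ha : 1 ≤ a) :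
    ((univ.filter (fun y : Perm α => sign y = s ∧ 2 ^ a ∣ orderOf y)).card : ℝ) ≤
      (Fintype.card α).factorial / 2 * ((1 / 2 ^ a) *
        ((∑ k ∈ Icc 1 (Fintype.card α / 2 ^ a), (1 / (k : ℝ)))
          + 1 / ((Fintype.card α / 2 ^ a : ℕ) : ℝ))) := by
  set J := Fintype.card α / 2 ^ a with hJ
  set N := Fintype.card α with hN
  have hm : 2 ≤ 2 ^ a := by
    calc 2 = 2 ^ 1 := by norm_num
      _ ≤ 2 ^ a := Nat.pow_le_pow_right (by norm_num) ha
  have e1 : ((univ.filter (fun y : Perm α => sign y = s ∧ 2 ^ a ∣ orderOf y)).card : ℝ) ≤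
      ∑ k ∈ Icc 1 J, ∑ d ∈ univ.filter (fun d : Perm α => d.cycleType = {2 ^ a * k}),
        ((univ.filter (fun z : Perm {x // x ∉ d.support} => sign z = s * sign d)).card : ℝ) := by
    have := (Finset.card_le_card (ssi_bad_subset (α := α) s a ha)).trans
      (Finset.card_biUnion_le.trans (Finset.sum_le_sum fun k _ =>
        Finset.card_biUnion_le.trans (Finset.sum_le_sum fun d _ => Finset.card_image_le)))
    exact_mod_cast this
  refine e1.trans ?_
  have e2 : ∀ k ∈ Icc 1 J, ∑ d ∈ univ.filter (fun d : Perm α => d.cycleType = {2 ^ a * k}),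
        ((univ.filter (fun z : Perm {x // x ∉ d.support} => sign z = s * sign d)).card : ℝ)
      ≤ (N.factorial : ℝ) / 2 * ((1 / 2 ^ a) * (1 / (k : ℝ) + if k = J then 1 / (J : ℝ) else 0)) := by
    intro k hk
    rw [mem_Icc] at hk
    have hkN : 2 ^ a * k ≤ N := by
      have := (Nat.le_div_iff_mul_le (by positivity)).1 hk.2
      rwa [mul_comm]
    have hk2 : 2 ≤ 2 ^ a * k := by nlinarith
    have f1 : ∀ d ∈ univ.filter (fun d : Perm α => d.cycleType = {2 ^ a * k}),
        ((univ.filter (fun z : Perm {x // x ∉ d.support} => sign z = s * sign d)).card : ℝ)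
        ≤ (N - 2 ^ a * k).factorial / 2 * (if N - 2 ^ a * k ≤ 1 then 2 else 1) := by
      intro d hd
      have := ssi_card_sign_le (α := {x // x ∉ d.support}) (s * sign d)
      rw [ssi_card_compl d _ (by simpa using hd)] at this
      exact this
    refine (Finset.sum_le_card_nsmul _ _ _ f1).trans ?_
    rw [nsmul_eq_mul, ssi_card_cycles _ hk2 hkN]
    have hF : (0:ℝ) < (N - 2 ^ a * k).factorial := by exact_mod_cast Nat.factorial_pos _
    have hF2 : (0:ℝ) < N.factorial := by exact_mod_cast Nat.factorial_pos _
    have hk0 : (0:ℝ) < k := by exact_mod_cast hk.1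
    have g1 : (N.factorial : ℝ) / (((2 ^ a * k : ℕ) : ℝ) * (N - 2 ^ a * k).factorial) *
        ((N - 2 ^ a * k).factorial / 2 * (if N - 2 ^ a * k ≤ 1 then 2 else 1))
        = (N.factorial : ℝ) / 2 * ((1 / 2 ^ a) * (1 / k * (if N - 2 ^ a * k ≤ 1 then 2 else 1))) := by
      push_cast
      field_simp
    rw [← hN, g1]
    gcongr
    split_ifs with h1 h2 h2
    · rw [h2]; linarith
    · exfalso
      apply h2
      have h3 : (k + 1) * 2 ^ a ≤ J * 2 ^ a := Nat.mul_le_mul_right _ (by omega)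
      have h4 : J * 2 ^ a ≤ N := Nat.div_mul_le_self _ _
      have : (k + 1) * 2 ^ a = 2 ^ a * k + 2 ^ a := by ring
      omega
    · have : (0:ℝ) ≤ 1 / (J : ℝ) := by positivity
      linarith
    · linarith
  refine (Finset.sum_le_sum e2).trans ?_
  rw [← Finset.mul_sum, ← Finset.mul_sum, Finset.sum_add_distrib]
  have : ∑ k ∈ Icc 1 J, (if k = J then 1 / (J : ℝ) else 0) ≤ 1 / (J : ℝ) := by
    rw [Finset.sum_ite_eq']
    split_ifs
    · exact le_rfl
    · positivity
  gcongr

open Equiv Equiv.Perm Finset in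
theorem ssi_good_prop {α : Type*} [Fintype α] [DecidableEq α] (a : ℕ) (ha : 1 ≤ a)
    (c y : Perm α) (hc : c.cycleType = {2 ^ a}) (hcy : Disjoint c y)
    (hy : ¬ 2 ^ a ∣ orderOf y) :
    Even (orderOf (c * y)) ∧ ((c * y) ^ (orderOf (c * y) / 2)).support.card ≤ 2 ^ a := by
  have hoc : orderOf c = 2 ^ a := by rw [← lcm_cycleType, hc]; simp
  have hcs : c.support.card = 2 ^ a := by rw [← sum_cycleType, hc]; simp
  have ho : orderOf (c * y) = Nat.lcm (2 ^ a) (orderOf y) := by rw [hcy.orderOf, hoc]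
  obtain ⟨b, rfl⟩ : ∃ b, a = b + 1 := ⟨a - 1, by omega⟩
  have hev : 2 ∣ orderOf (c * y) := by
    rw [ho]
    exact (Dvd.intro_left _ (pow_succ 2 b).symm).trans (Nat.dvd_lcm_left _ _)
  refine ⟨even_iff_two_dvd.2 hev, ?_⟩
  have hdiv : orderOf y ∣ orderOf (c * y) / 2 := by
    obtain ⟨q, hq⟩ : orderOf y ∣ orderOf (c * y) := by rw [ho]; exact Nat.dvd_lcm_right _ _
    by_cases h2 : 2 ∣ q
    · obtain ⟨r, rfl⟩ := h2
      refine ⟨r, ?_⟩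
      rw [hq]
      have : orderOf y * (2 * r) = 2 * (orderOf y * r) := by ring
      omega
    · exfalso
      apply hy
      have h3 : 2 ^ (b + 1) ∣ orderOf y * q := by rw [← hq, ho]; exact Nat.dvd_lcm_left _ _
      have h4 : Nat.Coprime (2 ^ (b + 1)) q :=
        Nat.Coprime.pow_left _ ((Nat.Prime.coprime_iff_not_dvd Nat.prime_two).2 h2)
      exact h4.dvd_of_dvd_mul_right h3
  rw [hcy.commute.mul_pow, orderOf_dvd_iff_pow_eq_one.1 hdiv, mul_one, ← hcs]
  exact Finset.card_le_card (support_pow_le _ _)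

open Equiv Equiv.Perm Finset in
theorem ssi_inj {α : Type*} [Fintype α] [DecidableEq α] (a : ℕ)
    (c y c' y' : Perm α) (hc : c.cycleType = {2 ^ a}) (hc' : c'.cycleType = {2 ^ a})
    (hcy : Disjoint c y) (hcy' : Disjoint c' y')
    (hy : ¬ 2 ^ a ∣ orderOf y) (h : c * y = c' * y') : c = c' := by
  have h1 : IsCycle c := by rw [← card_cycleType_eq_one, hc]; simp
  have h1' : IsCycle c' := by rw [← card_cycleType_eq_one, hc']; simp
  have h2 : c' ∈ cycleFactorsFinset (c' * y') := by
    rw [hcy'.cycleFactorsFinset_mul_eq_union, h1'.cycleFactorsFinset_eq_singleton]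
    simp
  rw [← h, hcy.cycleFactorsFinset_mul_eq_union, h1.cycleFactorsFinset_eq_singleton] at h2
  simp only [mem_union, mem_singleton] at h2
  rcases h2 with h2 | h2
  · exact h2.symm
  · exfalso
    apply hy
    have hcs : c'.support.card = 2 ^ a := by rw [← sum_cycleType, hc']; simp
    rw [← hcs]
    apply dvd_of_mem_cycleType
    rw [cycleType_def]
    exact Multiset.mem_map.2 ⟨c', h2, rfl⟩

open Equiv Equiv.Perm Finset in
theorem ssi_good_card {α : Type*} [Fintype α] [DecidableEq α] (s : ℤˣ) (a : ℕ) (ha : 1 ≤ a)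
    (hn : 2 ^ a + 2 ≤ Fintype.card α) (J : ℕ) (hJ : J = (Fintype.card α - 2 ^ a) / 2 ^ a) :
    (Fintype.card α).factorial / 2 * ((1 / 2 ^ a) * (1 - (1 / 2 ^ a) *
        ((∑ k ∈ Icc 1 J, (1 / (k : ℝ))) + 1 / (J : ℝ)))) ≤
    ((univ.filter (fun x : Perm α => sign x = s ∧ Even (orderOf x) ∧
      (x ^ (orderOf x / 2)).support.card ≤ 2 ^ a)).card : ℝ) := by
  set n := Fintype.card α with hn'
  set N := n - 2 ^ a with hN
  set E := (∑ k ∈ Icc 1 J, (1 / (k : ℝ))) + 1 / (J : ℝ) with hE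
  have hm : 2 ≤ 2 ^ a := by
    calc 2 = 2 ^ 1 := by norm_num
      _ ≤ 2 ^ a := Nat.pow_le_pow_right (by norm_num) ha
  set C := univ.filter (fun d : Perm α => d.cycleType = {2 ^ a}) with hC
  set Y : Perm α → Finset (Perm α) := fun c =>
    (univ.filter (fun z : Perm {x // x ∉ c.support} =>
      sign z = s * sign c ∧ ¬ 2 ^ a ∣ orderOf z)).image (fun z => c * ofSubtype z) with hY
  have hsub : C.biUnion Y ⊆ univ.filter (fun x : Perm α => sign x = s ∧ Even (orderOf x) ∧
      (x ^ (orderOf x / 2)).support.card ≤ 2 ^ a) := by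
    intro x hx
    simp only [hC, hY, mem_biUnion, mem_filter, mem_univ, true_and, mem_image] at hx
    obtain ⟨c, hc, z, ⟨hz1, hz2⟩, rfl⟩ := hx
    simp only [mem_filter, mem_univ, true_and]
    refine ⟨?_, ssi_good_prop a ha c _ hc (ssi_disjoint c z) ?_⟩
    · rw [Perm.sign_mul, sign_ofSubtype, hz1, mul_comm, mul_assoc, Int.units_mul_self, mul_one]
    · rwa [orderOf_injective _ ofSubtype_injective]
  have hdisj : (C : Set (Perm α)).PairwiseDisjoint Y := by
    intro c hc c' hc' hne
    rw [Function.onFun, Finset.disjoint_left]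
    intro x hx hx'
    simp only [hY, mem_filter, mem_univ, true_and, mem_image] at hx hx'
    obtain ⟨z, ⟨hz1, hz2⟩, rfl⟩ := hx
    obtain ⟨z', ⟨hz1', hz2'⟩, h⟩ := hx'
    apply hne
    refine ssi_inj a c _ c' _ (by simpa [hC] using hc) (by simpa [hC] using hc')
      (ssi_disjoint c z) (ssi_disjoint c' z') ?_ h.symm
    rwa [orderOf_injective _ ofSubtype_injective]
  have hcardY : ∀ c ∈ C, (N.factorial : ℝ) / 2 * (1 - (1 / 2 ^ a) * E) ≤ ((Y c).card : ℝ) := by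
    intro c hc
    have hcard : Fintype.card {x // x ∉ c.support} = N := ssi_card_compl c _ (by simpa [hC] using hc)
    have h0 : (Y c).card = (univ.filter (fun z : Perm {x // x ∉ c.support} =>
      sign z = s * sign c ∧ ¬ 2 ^ a ∣ orderOf z)).card := by
      apply Finset.card_image_of_injective
      intro z z' h
      exact ofSubtype_injective (mul_left_cancel h)
    have h1 := ssi_card_bad_le (α := {x // x ∉ c.support}) (s * sign c) a ha
    have h2 := ssi_two_mul_card_sign (α := {x // x ∉ c.support}) (s * sign c) (by omega)
    have h3 := Finset.card_filter_add_card_filter_not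
      (s := univ.filter (fun z : Perm {x // x ∉ c.support} => sign z = s * sign c))
      (fun z => 2 ^ a ∣ orderOf z)
    rw [Finset.filter_filter, Finset.filter_filter, ← h0] at h3
    rw [hcard, ← hJ, ← hE] at h1
    rw [hcard] at h2
    have h2' : 2 * ((univ.filter (fun z : Perm {x // x ∉ c.support} => sign z = s * sign c)).card : ℝ)
      = N.factorial := by exact_mod_cast h2
    have h3' : ((univ.filter (fun z : Perm {x // x ∉ c.support} =>
      sign z = s * sign c ∧ 2 ^ a ∣ orderOf z)).card : ℝ) + (Y c).card =
      ((univ.filter (fun z : Perm {x // x ∉ c.support} => sign z = s * sign c)).card : ℝ) := by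
      exact_mod_cast h3
    linarith
  have h5 : ((C.biUnion Y).card : ℝ) = ∑ c ∈ C, ((Y c).card : ℝ) := by
    rw [Finset.card_biUnion hdisj]
    push_cast
    rfl
  have h6 := Finset.card_nsmul_le_sum C _ _ hcardY
  rw [← h5, nsmul_eq_mul, ssi_card_cycles _ hm (by omega), ← hn', ← hN] at h6
  have h7 := (Nat.cast_le (α := ℝ)).2 (Finset.card_le_card hsub)
  refine le_trans (le_of_eq ?_) (h6.trans h7)
  have hF : (0:ℝ) < N.factorial := by exact_mod_cast Nat.factorial_pos _
  push_cast
  field_simp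

theorem ssi_harm (J : ℕ) (hJ : 1 ≤ J) :
    (∑ k ∈ Finset.Icc 1 J, (1 / (k : ℝ))) + 1 / (J : ℝ) ≤ 2 + Real.log J := by
  have h1 := harmonic_le_one_add_log J
  rw [harmonic_eq_sum_Icc] at h1
  push_cast at h1
  have h2 : 1 / (J : ℝ) ≤ 1 := by
    rw [div_le_one (by exact_mod_cast hJ)]
    exact_mod_cast hJ
  simp only [one_div] at h2 ⊢
  linarith

theorem ssi_small (n : ℕ) (hn : 9 ≤ n) (hn2 : n < 36) :
    1 / (13 * Real.log n) ≤ (1 / 2 ^ 2) * (1 - (1 / 2 ^ 2) *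
        ((∑ k ∈ Finset.Icc 1 ((n - 2 ^ 2) / 2 ^ 2 : ℕ), (1 / (k : ℝ)))
          + 1 / (((n - 2 ^ 2) / 2 ^ 2 : ℕ) : ℝ))) := by
  have hlog : 2 ≤ Real.log n := by
    have h1 : Real.log 8 ≤ Real.log n :=
      Real.log_le_log (by norm_num) (by exact_mod_cast (by omega : 8 ≤ n))
    have h2 : Real.log 8 = 3 * Real.log 2 := by
      rw [show (8:ℝ) = 2 ^ 3 by norm_num, Real.log_pow]; norm_num
    have := Real.log_two_gt_d9
    linarith
  have h1 : 1 / (13 * Real.log n) ≤ 1 / 26 := by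
    apply one_div_le_one_div_of_le (by norm_num)
    linarith
  refine h1.trans ?_
  have hJ1 : 1 ≤ (n - 2 ^ 2) / 2 ^ 2 := by omega
  have hJ2 : (n - 2 ^ 2) / 2 ^ 2 ≤ 7 := by omega
  generalize (n - 2 ^ 2) / 2 ^ 2 = J at hJ1 hJ2
  interval_cases J <;> norm_num [Finset.sum_Icc_succ_top]

theorem ssi_mid (n : ℕ) (hn : 36 ≤ n) (hn2 : n < 400) :
    1 / (13 * Real.log n) ≤ (1 / 2 ^ 3) * (1 - (1 / 2 ^ 3) *
        ((∑ k ∈ Finset.Icc 1 ((n - 2 ^ 3) / 2 ^ 3 : ℕ), (1 / (k : ℝ)))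
          + 1 / (((n - 2 ^ 3) / 2 ^ 3 : ℕ) : ℝ))) := by
  have l1 := Real.log_two_gt_d9
  have l2 := Real.log_two_lt_d9
  have hlog : 5 * Real.log 2 ≤ Real.log n := by
    have h1 : Real.log 32 ≤ Real.log n :=
      Real.log_le_log (by norm_num) (by exact_mod_cast (by omega : 32 ≤ n))
    have h2 : Real.log 32 = 5 * Real.log 2 := by
      rw [show (32:ℝ) = 2 ^ 5 by norm_num, Real.log_pow]; norm_num
    linarith
  have h1 : 1 / (13 * Real.log n) ≤ 1 / (13 * 3.46) := by
    apply one_div_le_one_div_of_le (by norm_num)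
    linarith
  refine h1.trans ?_
  have hJ1 : 1 ≤ (n - 2 ^ 3) / 2 ^ 3 := by omega
  have hJ2 : (n - 2 ^ 3) / 2 ^ 3 ≤ 64 := by omega
  generalize (n - 2 ^ 3) / 2 ^ 3 = J at hJ1 hJ2
  have h3 := ssi_harm J hJ1
  have h4 : Real.log J ≤ 6 * Real.log 2 := by
    have h1 : Real.log J ≤ Real.log 64 :=
      Real.log_le_log (by exact_mod_cast hJ1) (by exact_mod_cast hJ2)
    have h2 : Real.log 64 = 6 * Real.log 2 := by
      rw [show (64:ℝ) = 2 ^ 6 by norm_num, Real.log_pow]; norm_num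
    linarith
  norm_num at *
  linarith

theorem ssi_arith (n : ℕ) (hn : 9 ≤ n) : ∃ a : ℕ, 1 ≤ a ∧ 2 ^ a + 2 ≤ n ∧
    ((2 ^ a : ℕ) : ℝ) ≤ 4 * Real.sqrt n / 3 ∧
    1 / (13 * Real.log n) ≤ (1 / 2 ^ a) * (1 - (1 / 2 ^ a) *
        ((∑ k ∈ Finset.Icc 1 ((n - 2 ^ a) / 2 ^ a : ℕ), (1 / (k : ℝ)))
          + 1 / (((n - 2 ^ a) / 2 ^ a : ℕ) : ℝ))) := by
  rcases Nat.lt_or_ge n 36 with h36 | h36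
  · refine ⟨2, by norm_num, by omega, ?_, ssi_small n hn h36⟩
    have : (3:ℝ) ≤ Real.sqrt n := by
      apply Real.le_sqrt_of_sq_le
      norm_num
      exact_mod_cast hn
    norm_num
    linarith
  rcases Nat.lt_or_ge n 400 with h400 | h400
  · refine ⟨3, by norm_num, by omega, ?_, ssi_mid n h36 h400⟩
    have : (6:ℝ) ≤ Real.sqrt n := by
      apply Real.le_sqrt_of_sq_le
      norm_num
      exact_mod_cast h36
    norm_num
    linarith
  have l1 := Real.log_two_gt_d9
  have l2 := Real.log_two_lt_d9
  have hnR : (400:ℝ) ≤ n := by exact_mod_cast h400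
  set L := Real.log n with hL
  have hL5 : 5 ≤ L := by
    have h1 : Real.log 256 ≤ Real.log n := Real.log_le_log (by norm_num) (by linarith)
    have h2 : Real.log 256 = 8 * Real.log 2 := by
      rw [show (256:ℝ) = 2 ^ 8 by norm_num, Real.log_pow]; norm_num
    linarith
  set y := Real.sqrt n with hy
  have hy20 : 20 ≤ y := by
    apply Real.le_sqrt_of_sq_le
    linarith
  have hyy : y * y = n := Real.mul_self_sqrt (by positivity)
  have hLy : 3 * L ≤ y := by
    have h1 : L = 2 * Real.log y := by
      rw [hL, ← hyy, Real.log_mul (by linarith) (by linarith)]; ring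
    have h2 : Real.log (y / 32) ≤ y / 32 - 1 := Real.log_le_sub_one_of_pos (by linarith)
    rw [Real.log_div (by linarith) (by norm_num)] at h2
    have h3 : Real.log 32 = 5 * Real.log 2 := by
      rw [show (32:ℝ) = 2 ^ 5 by norm_num, Real.log_pow]; norm_num
    linarith
  obtain ⟨b, hb1, hb2⟩ := exists_nat_pow_near (x := 2 * L) (y := (2:ℝ)) (by linarith) (by norm_num)
  have hb3 : (2:ℝ) ^ (b + 1) ≤ 4 * L := by rw [pow_succ]; linarith
  have hmn : 4 * (2:ℝ) ^ (b + 1) ≤ n := by nlinarith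
  have hmn' : 4 * 2 ^ (b + 1) ≤ n := by exact_mod_cast hmn
  have hm0 : 0 < 2 ^ (b + 1) := by positivity
  have hm10 : (10:ℝ) ≤ 2 ^ (b + 1) := by linarith
  have hm10' : 10 ≤ 2 ^ (b + 1) := by exact_mod_cast hm10
  refine ⟨b + 1, by omega, by omega, ?_, ?_⟩
  · push_cast
    linarith
  have hJ1 : 1 ≤ (n - 2 ^ (b + 1)) / 2 ^ (b + 1) := by
    rw [Nat.le_div_iff_mul_le hm0]
    omega
  have hJ2 : (n - 2 ^ (b + 1)) / 2 ^ (b + 1) * 2 ^ (b + 1) ≤ n :=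
    (Nat.div_mul_le_self _ _).trans (Nat.sub_le _ _)
  generalize (n - 2 ^ (b + 1)) / 2 ^ (b + 1) = J at hJ1 hJ2
  have h3 := ssi_harm J hJ1
  have hJ0 : (0:ℝ) < J := by exact_mod_cast hJ1
  have hJ2' : (J:ℝ) * 2 ^ (b + 1) ≤ n := by exact_mod_cast hJ2
  generalize hm : (2:ℝ) ^ (b + 1) = m at *
  generalize (∑ k ∈ Finset.Icc 1 J, (1 / (k : ℝ))) + 1 / (J : ℝ) = E at *
  have hlogm : 2 ≤ Real.log m := by
    have h1 : Real.log 8 ≤ Real.log m := Real.log_le_log (by norm_num) (by linarith)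
    have h2 : Real.log 8 = 3 * Real.log 2 := by
      rw [show (8:ℝ) = 2 ^ 3 by norm_num, Real.log_pow]; norm_num
    linarith
  have h4 : Real.log J + Real.log m ≤ L := by
    rw [← Real.log_mul hJ0.ne' (by linarith)]
    exact Real.log_le_log (by positivity) hJ2'
  have hE : E ≤ L := by linarith
  have hm0' : 0 < m := by linarith
  have h5 : 1 / m * E ≤ 1 / 2 := by
    rw [one_div, inv_mul_le_iff₀ hm0']
    linarith
  have h6 : 1 / m * (1 / 2) ≤ 1 / m * (1 - 1 / m * E) := by
    gcongr
    linarith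
  refine le_trans ?_ h6
  rw [← one_div_mul_one_div_rev, div_mul_div_comm, div_mul_div_comm, div_le_div_iff₀ (by positivity) (by positivity)]
  linarith

open Equiv Equiv.Perm Finset in
theorem ssi_sign_bound (n : ℕ) (hn : 9 ≤ n) (s : ℤˣ) (P : Perm (Fin n) → Prop) [DecidablePred P]
    (hP : ∀ x, Even (orderOf x) → ((x ^ (orderOf x / 2)).support.card : ℝ) ≤ 4 * Real.sqrt n / 3 →
      P x) :
    (n.factorial : ℝ) / 2 * (1 / (13 * Real.log n)) ≤
      ((univ.filter (fun x : Perm (Fin n) => sign x = s ∧ P x)).card : ℝ) := by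
  obtain ⟨a, ha1, ha2, ha3, ha4⟩ := ssi_arith n hn
  have h1 := ssi_good_card (α := Fin n) s a ha1 (by simpa using ha2) _ rfl
  rw [Fintype.card_fin] at h1
  refine le_trans (mul_le_mul_of_nonneg_left ha4 (by positivity)) (h1.trans ?_)
  rw [Nat.cast_le]
  apply Finset.card_le_card
  intro x hx
  simp only [mem_filter, mem_univ, true_and] at hx ⊢
  refine ⟨hx.1, hP x hx.2.1 (le_trans ?_ ha3)⟩
  exact_mod_cast hx.2.2

open scoped Classical

/-- For `n ≥ 9` and `G ∈ {Alt_n, Sym_n}`, the proportion of elements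
`x ∈ G` of even order such that `x ^ (|x|/2)` moves at most `4√n/3` points is at least
`1/(13 log n)`. -/
theorem smallSupportInvolutions_proportion (n : ℕ) (hn : 9 ≤ n)
    (H : Subgroup (Equiv.Perm (Fin n)))
    (hH : H = ⊤ ∨ H = alternatingGroup (Fin n)) :
    1 / (13 * Real.log n) ≤
      ((Finset.univ.filter (fun x : H =>
          Even (orderOf (x : Equiv.Perm (Fin n))) ∧
          ((((x : Equiv.Perm (Fin n)) ^ (orderOf (x : Equiv.Perm (Fin n)) / 2)).support.card : ℝ)
            ≤ 4 * Real.sqrt n / 3))).card : ℝ) / (Fintype.card H) := by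
  set P : Equiv.Perm (Fin n) → Prop := fun x => Even (orderOf x) ∧
    ((x ^ (orderOf x / 2)).support.card : ℝ) ≤ 4 * Real.sqrt n / 3 with hP
  have hb := fun s => ssi_sign_bound n hn s P (fun x h1 h2 => ⟨h1, h2⟩)
  have hcard : (Finset.univ.filter (fun x : H => P x)).card
      = (Finset.univ.filter (fun x : Equiv.Perm (Fin n) => x ∈ H ∧ P x)).card := by
    apply Finset.card_bij (fun (x : H) _ => (x : Equiv.Perm (Fin n)))
    · intro x hx
      simp only [Finset.mem_filter, Finset.mem_univ, true_and] at hx ⊢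
      exact ⟨x.2, hx⟩
    · intro x _ y _ h
      exact Subtype.ext h
    · intro x hx
      simp only [Finset.mem_filter, Finset.mem_univ, true_and] at hx
      exact ⟨⟨x, hx.1⟩, by simpa using hx.2, rfl⟩
  have hpos : (0:ℝ) < Fintype.card H := by exact_mod_cast Fintype.card_pos
  rw [le_div_iff₀ hpos]
  change _ ≤ ((Finset.univ.filter (fun x : H => P x)).card : ℝ)
  rw [hcard, ← Nat.card_eq_fintype_card]
  rcases hH with rfl | rfl
  · have h1 : (Nat.card (⊤ : Subgroup (Equiv.Perm (Fin n))) : ℝ) = n.factorial := by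
      rw [Subgroup.card_top, Nat.card_eq_fintype_card,
        Fintype.card_perm, Fintype.card_fin]
    rw [h1]
    have h2 : (Finset.univ.filter (fun x : Equiv.Perm (Fin n) =>
        x ∈ (⊤ : Subgroup (Equiv.Perm (Fin n))) ∧ P x)) =
        (Finset.univ.filter (fun x : Equiv.Perm (Fin n) => Equiv.Perm.sign x = 1 ∧ P x)) ∪
        (Finset.univ.filter (fun x : Equiv.Perm (Fin n) => Equiv.Perm.sign x = -1 ∧ P x)) := by
      ext x
      simp only [Finset.mem_filter, Finset.mem_univ, true_and, Finset.mem_union, Subgroup.mem_top]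
      have := Int.units_eq_one_or (Equiv.Perm.sign x)
      tauto
    rw [h2, Finset.card_union_of_disjoint]
    · have := hb 1
      have := hb (-1)
      push_cast
      linarith
    · rw [Finset.disjoint_left]
      intro x hx hx'
      simp only [Finset.mem_filter, Finset.mem_univ, true_and] at hx hx'
      rw [hx.1] at hx'
      exact absurd hx'.1 (by decide)
  · have : Nontrivial (Fin n) := Fin.nontrivial_iff_two_le.2 (by omega)
    have h1 : 2 * (Nat.card (alternatingGroup (Fin n)) : ℝ) = n.factorial := by
      have := two_mul_nat_card_alternatingGroup (α := Fin n)
      rw [Nat.card_eq_fintype_card (α := Equiv.Perm (Fin n)), Fintype.card_perm,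
        Fintype.card_fin] at this
      exact_mod_cast this
    have h2 := hb 1
    rw [← h1] at h2
    have h3 : (Finset.univ.filter (fun x : Equiv.Perm (Fin n) =>
        x ∈ alternatingGroup (Fin n) ∧ P x)) =
        (Finset.univ.filter (fun x : Equiv.Perm (Fin n) => Equiv.Perm.sign x = 1 ∧ P x)) := by
      ext x
      simp only [Finset.mem_filter, Equiv.Perm.mem_alternatingGroup]
    rw [h3]
    linarith
end

section
/- Let n ≥ 7 be a natural number, let G be either Alt_n or Sym_n, let k be an integer with 1 ≤ k ≤ 2√n/3, and let s ∈ G be an involution moving exactly 2k points. Let M be the set of elements in the conjugacy class s^G that do not commute with s. Then the proportion of elements r ∈ M such that (sr)² is a 3-cycle is at least 1/3. -/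
open scoped Classical

theorem finCheck : ∀ k < 28, 2 ≤ k → ∀ j < 28, (k = 2 ∧ j = 0) ∨
   ((9*k^2+3)/4+j).descFactorial (2*k) ≤ ((9*k^2+3)/4+j-2*k).descFactorial (2*k)
     + 3*(2*k)^2 * ((9*k^2+3)/4+j-2*k).descFactorial (2*k-1) := by
  decide +kernel

theorem expBound (x : ℝ) (h0 : 0 ≤ x) (h1 : x ≤ 19/10) : Real.exp x ≤ 1 + 3 * x := by
  have hc := convexOn_exp.2 (Set.mem_univ (0:ℝ)) (Set.mem_univ (19/10:ℝ))
    (show (0:ℝ) ≤ 1 - x/(19/10) by linarith) (show (0:ℝ) ≤ x/(19/10) by positivity) (by ring)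
  simp only [smul_eq_mul, Real.exp_zero] at hc
  have he : Real.exp (19/10) ≤ 6.7 := by
    have : Real.exp (19/10) = (Real.exp 1)^2 * Real.exp (-(1/10)) := by
      rw [← Real.exp_nat_mul, ← Real.exp_add]; norm_num
    have h2 : Real.exp (-(1/10)) ≤ 1000/1105 := by
      rw [Real.exp_neg]
      have := Real.quadratic_le_exp_of_nonneg (show (0:ℝ) ≤ 1/10 by norm_num)
      rw [inv_le_comm₀ (Real.exp_pos _) (by norm_num)]
      norm_num at this ⊢; linarith
    have h3 := Real.exp_one_lt_d9
    have h4 : (Real.exp 1)^2 ≤ 2.7182818286^2 := by gcongr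
    rw [this]
    calc _ ≤ (2.7182818286:ℝ)^2 * (1000/1105) := by gcongr
      _ ≤ _ := by norm_num
  have e1 : (1 - x/(19/10)) * 0 + x/(19/10) * (19/10) = x := by field_simp; ring
  rw [e1] at hc
  nlinarith [mul_le_mul_of_nonneg_left he (show (0:ℝ) ≤ x/(19/10) by positivity)]

theorem bigBound (n m : ℕ) (hm : 1 ≤ m) (h2 : 2 * m ≤ n)
    (hx : 10 * m^2 ≤ 19 * (n - 2 * m + 1)) :
    n.descFactorial m ≤ (n - m).descFactorial m + 3 * m^2 * (n - m).descFactorial (m-1) := by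
  set d := n - 2 * m + 1 with hd
  have hdpos : (0:ℝ) < d := by positivity
  have e1 : (n - m).descFactorial m = d * (n-m).descFactorial (m-1) := by
    obtain ⟨l, rfl⟩ : ∃ l, m = l + 1 := ⟨m-1, by omega⟩
    rw [Nat.descFactorial_succ, Nat.add_sub_cancel]
    congr 1; omega
  have e2 : (n.descFactorial m : ℝ) ≤ (1 + m / d : ℝ)^m * (n-m).descFactorial m := by
    rw [Nat.descFactorial_eq_prod_range, Nat.descFactorial_eq_prod_range]
    push_cast
    have : (1 + m / d : ℝ)^m = ∏ i ∈ Finset.range m, (1 + m / d : ℝ) := by simp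
    rw [this, ← Finset.prod_mul_distrib]
    apply Finset.prod_le_prod
    · intros; positivity
    · intro i hi
      have hi := Finset.mem_range.1 hi
      have hh : ((n - i : ℕ) : ℝ) = (n - m - i : ℕ) + m := by
        rw [← Nat.cast_add]; congr 1; omega
      have hh2 : (d : ℝ) ≤ (n - m - i : ℕ) := by
        rw [Nat.cast_le]; omega
      rw [hh, add_mul, one_mul]
      have : (m : ℝ) = m / d * d := by field_simp
      have : (m : ℝ) ≤ m / d * (n - m - i : ℕ) := by
        calc (m : ℝ) = m / d * d := this
          _ ≤ _ := by gcongr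
      linarith
  have e3 : (1 + m / d : ℝ)^m ≤ 1 + 3 * (m^2 / d) := by
    have a1 : (1 + m / d : ℝ) ≤ Real.exp (m/d) := by
      have := Real.add_one_le_exp (m/d : ℝ); linarith
    have a2 : (1 + m / d : ℝ)^m ≤ Real.exp (m/d) ^ m := by gcongr
    rw [← Real.exp_nat_mul] at a2
    have a3 : (m : ℝ) * (m / d) = m^2 / d := by ring
    rw [a3] at a2
    refine a2.trans (expBound _ (by positivity) ?_)
    rw [div_le_iff₀ hdpos]
    have : ((10 * m^2 : ℕ) : ℝ) ≤ (19 * d : ℕ) := by exact_mod_cast hx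
    push_cast at this
    linarith
  have e4 : (n.descFactorial m : ℝ) ≤ (1 + 3 * (m^2 / d)) * (n-m).descFactorial m :=
    e2.trans (by gcongr)
  rw [e1] at e4 ⊢
  push_cast at e4
  have e5 : (1 + 3 * ((m:ℝ)^2 / d)) * (d * (n-m).descFactorial (m-1)) =
      d * (n-m).descFactorial (m-1) + 3 * m^2 * (n-m).descFactorial (m-1) := by
    field_simp
  rw [e5] at e4
  exact_mod_cast e4

theorem numBound (n k : ℕ) (hn : 7 ≤ n) (hk : 1 ≤ k) (h : 9 * k^2 ≤ 4 * n)
    (hex : ¬ (k = 2 ∧ n = 9)) :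
    n.choose (2*k) ≤ (n - 2*k).choose (2*k) + 3 * (2*k) * (n-2*k).choose (2*k-1) := by
  have h2 : 2 * (2*k) ≤ n := by
    by_cases hk1 : k = 1
    · omega
    · have : 2 ≤ k := by omega
      by_contra hh
      have : n = 4 * k - 1 ∨ n < 4 * k - 1 := by omega
      nlinarith
  have key : n.descFactorial (2*k) ≤ (n - 2*k).descFactorial (2*k)
      + 3 * (2*k)^2 * (n - 2*k).descFactorial (2*k-1) := by
    by_cases hx : 10 * (2*k)^2 ≤ 19 * (n - 2 * (2*k) + 1)
    · exact bigBound n (2*k) (by omega) h2 hx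
    · obtain ⟨d, hd⟩ := Nat.exists_eq_add_of_le h2
      have e : n - 2 * (2*k) = d := by omega
      rw [e] at hx
      push Not at hx
      have hk27 : k < 28 := by
        by_contra hc
        push Not at hc
        nlinarith [Nat.mul_le_mul_left k hc]
      have hk2 : 2 ≤ k := by
        by_contra hc
        have : k = 1 := by omega
        subst this
        omega
      have hj : (9*k^2+3)/4 ≤ n := by omega
      obtain ⟨j, hj⟩ := Nat.exists_eq_add_of_le hj
      have hj28 : j < 28 := by
        interval_cases k <;> omega
      rcases finCheck k hk27 hk2 j hj28 with ⟨rfl, rfl⟩ | hf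
      · exact absurd ⟨rfl, by omega⟩ hex
      · rw [← hj] at hf; exact hf
  obtain ⟨l, hl⟩ : ∃ l, 2 * k = l + 1 := ⟨2*k-1, by omega⟩
  rw [hl] at key ⊢
  simp only [Nat.add_sub_cancel, Nat.descFactorial_eq_factorial_mul_choose] at key ⊢
  have hp := Nat.factorial_pos (l+1)
  refine Nat.le_of_mul_le_mul_left ?_ hp
  refine key.trans (le_of_eq ?_)
  rw [Nat.factorial_succ]; ring

theorem overlapCount (n m : ℕ) (S : Finset (Fin n)) (hS : S.card = m) :
    (Finset.univ.filter (fun T : Finset (Fin n) => T.card = m ∧ ¬ Disjoint S T)).card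
      + (n - m).choose m = n.choose m := by
  have h1 : (Finset.powersetCard m Sᶜ).card = (n-m).choose m := by
    rw [Finset.card_powersetCard, Finset.card_compl, hS, Fintype.card_fin]
  have h2 : (Finset.powersetCard m (Finset.univ : Finset (Fin n))).card = n.choose m := by
    rw [Finset.card_powersetCard]; simp
  rw [← h1, ← h2, ← Finset.card_union_of_disjoint]
  · congr 1
    ext T
    simp only [Finset.mem_union, Finset.mem_filter, Finset.mem_univ, true_and,
      Finset.mem_powersetCard, Finset.subset_univ,
      Finset.subset_compl_comm]
    have : S ⊆ Tᶜ ↔ Disjoint S T := by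
      rw [Finset.subset_compl_iff_disjoint_right]
    tauto
  · rw [Finset.disjoint_left]
    intro T hT hT2
    simp only [Finset.mem_filter, Finset.mem_powersetCard] at hT hT2
    exact hT.2.2 (Finset.subset_compl_iff_disjoint_right.1 (Finset.subset_compl_comm.1 hT2.1))

theorem oneCount (n m : ℕ) (hm : 1 ≤ m) (S : Finset (Fin n)) (hS : S.card = m) :
    m * (n - m).choose (m-1) ≤
    (Finset.univ.filter (fun T : Finset (Fin n) => T.card = m ∧ (S ∩ T).card = 1)).card := by
  have h1 : (S ×ˢ Finset.powersetCard (m-1) Sᶜ).card = m * (n-m).choose (m-1) := by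
    rw [Finset.card_product, Finset.card_powersetCard, Finset.card_compl, hS, Fintype.card_fin]
  rw [← h1]
  have key : ∀ p ∈ S, ∀ U ⊆ Sᶜ, S ∩ insert p U = {p} := by
    intro p hp U hU
    ext x
    simp only [Finset.mem_inter, Finset.mem_insert, Finset.mem_singleton]
    constructor
    · rintro ⟨hx, rfl | hx2⟩
      · rfl
      · exact absurd hx (Finset.mem_compl.1 (hU hx2))
    · rintro rfl; exact ⟨hp, Or.inl rfl⟩
  apply Finset.card_le_card_of_injOn (fun q => insert q.1 q.2)
  · rintro ⟨p, U⟩ hq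
    simp only [Finset.coe_product, Set.mem_prod, Finset.mem_coe, Finset.mem_powersetCard] at hq
    obtain ⟨hp, hU, hc⟩ := hq
    have hpU : p ∉ U := fun h => Finset.mem_compl.1 (hU h) hp
    simp only [Finset.coe_filter, Set.mem_ofPred_eq, Finset.mem_univ, true_and]
    rw [key p hp U hU, Finset.card_insert_of_notMem hpU, hc]
    exact ⟨by omega, by simp⟩
  · rintro ⟨p, U⟩ hq ⟨p2, U2⟩ hq2 he
    simp only [Finset.coe_product, Set.mem_prod, Finset.mem_coe, Finset.mem_powersetCard] at hq hq2
    obtain ⟨hp, hU, hc⟩ := hq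
    obtain ⟨hp2, hU2, hc2⟩ := hq2
    simp only at he
    have hpU : p ∉ U := fun h => Finset.mem_compl.1 (hU h) hp
    have hpU2 : p2 ∉ U2 := fun h => Finset.mem_compl.1 (hU2 h) hp2
    have e := key p hp U hU
    rw [he, key p2 hp2 U2 hU2] at e
    have e : p2 = p := by simpa using e
    subst e
    have : U = U2 := by
      rw [← Finset.erase_insert hpU, he, Finset.erase_insert hpU2]
    rw [this]

theorem threeCycle_of_inter {n : ℕ} (s r : Equiv.Perm (Fin n)) (hs : ∀ x, s (s x) = x)
    (hr : ∀ x, r (r x) = x) (h : (s.support ∩ r.support).card = 1) :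
    ((s * r)^2).IsThreeCycle := by
  obtain ⟨p, hp⟩ := Finset.card_eq_one.1 h
  have hI : ∀ x, s x ≠ x → r x ≠ x → x = p := by
    intro x h1 h2
    have : x ∈ s.support ∩ r.support := by simp [h1, h2]
    rw [hp] at this; simpa using this
  have hpm : p ∈ s.support ∩ r.support := by rw [hp]; simp
  simp only [Finset.mem_inter, Equiv.Perm.mem_support] at hpm
  obtain ⟨sp, rp⟩ := hpm
  have rq : r (s p) = s p := by
    by_contra hc
    exact sp (hI (s p) (by rw [hs]; exact sp.symm) hc)
  have st : s (r p) = r p := by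
    by_contra hc
    exact rp (hI (r p) hc (by rw [hr]; exact rp.symm))
  have qt : s p ≠ r p := by
    intro hc
    rw [hc, hr] at rq
    exact rp rq.symm
  rw [← card_support_eq_three_iff]
  have : ((s*r)^2).support = {p, s p, r p} := by
    ext x
    simp only [Equiv.Perm.mem_support, pow_two, Equiv.Perm.mul_apply, Finset.mem_insert,
      Finset.mem_singleton]
    constructor
    · intro hx
      by_contra hc
      push Not at hc
      obtain ⟨c1, c2, c3⟩ := hc
      apply hx
      by_cases hsx : s x = x
      · have : s (r x) = r x := by
          by_contra hd
          by_cases hrx : r x = x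
          · rw [hrx] at hd; exact hd hsx
          · have := hI (r x) hd (by rw [hr]; exact Ne.symm hrx)
            apply c3; rw [← this, hr]
        rw [this, hr, hsx]
      · have hrx : r x = x := by
          by_contra hd; exact c1 (hI x hsx hd)
        have : r (s x) = s x := by
          by_contra hd
          have := hI (s x) (by rw [hs]; exact Ne.symm hsx) hd
          apply c2; rw [← this, hs]
        rw [hrx, this, hs]
    · rintro (rfl | rfl | rfl)
      · rw [st, hr]; exact sp
      · rw [rq, hs, st]; exact qt.symm
      · rw [hr, rq, hs]; exact rp.symm
  rw [this, Finset.card_eq_three]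
  exact ⟨p, s p, r p, sp.symm, rp.symm, qt, rfl⟩

theorem comm_of_four {n : ℕ} (s r : Equiv.Perm (Fin n)) (hs : ∀ x, s (s x) = x)
    (hr : ∀ x, r (r x) = x) (h : s.support = r.support) (h4 : s.support.card = 4) :
    s * r = r * s := by
  have hfix : ∀ x, s x = x ↔ r x = x := by
    intro x
    have : x ∈ s.support ↔ x ∈ r.support := by rw [h]
    simp only [Equiv.Perm.mem_support] at this
    tauto
  ext a
  simp only [Equiv.Perm.mul_apply]
  congr 1
  by_cases ha : s a = a
  · rw [(hfix a).1 ha, ha, (hfix a).1 ha]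
  have haN : r a ≠ a := fun hc => ha ((hfix a).2 hc)
  by_cases hE : r a = s a
  · rw [hE, hs, ← hE, hr]
  by_contra hne
  have hsN : ∀ x, s x ≠ x → s (s x) ≠ s x := fun x hx hc => hx (s.injective hc)
  have hrN : ∀ x, s x ≠ x → s (r x) ≠ r x := fun x hx hc => by
    have := (hfix _).1 hc
    exact hx ((hfix _).2 (r.injective this))
  have hsub : ({a, r a, s a, s (r a), r (s a)} : Finset (Fin n)) ⊆ s.support := by
    intro x hx
    simp only [Finset.mem_insert, Finset.mem_singleton] at hx
    rw [Equiv.Perm.mem_support]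
    rcases hx with rfl | rfl | rfl | rfl | rfl
    · exact ha
    · exact hrN _ ha
    · exact hsN _ ha
    · exact hsN _ (hrN _ ha)
    · exact hrN _ (hsN _ ha)
  have hc := Finset.card_le_card hsub
  have n1 : a ≠ s (r a) := fun hc => by
    have := congrArg s hc; rw [hs] at this; exact hE this.symm
  have n2 : a ≠ r (s a) := fun hc => by
    have := congrArg r hc; rw [hr] at this; exact hE this
  have n3 : r a ≠ s (r a) := (hrN _ ha).symm
  have n4 : r a ≠ r (s a) := fun hc => ha (r.injective hc).symm
  have n5 : s a ≠ s (r a) := fun hc => haN (s.injective hc).symm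
  have n6 : s a ≠ r (s a) := fun hc => (hsN _ ha) ((hfix _).2 hc.symm)
  have : ({a, r a, s a, s (r a), r (s a)} : Finset (Fin n)).card = 5 := by
    rw [Finset.card_insert_of_notMem, Finset.card_insert_of_notMem, Finset.card_insert_of_notMem,
      Finset.card_insert_of_notMem, Finset.card_singleton] <;>
      simp [*, Ne.symm ha, Ne.symm haN]
  omega

theorem fiber_const {n : ℕ} (s : Equiv.Perm (Fin n)) (T : Finset (Fin n))
    (hT : T.card = s.support.card) :
    (Finset.univ.filter (fun r : Equiv.Perm (Fin n) => IsConj s r ∧ r.support = T)).card =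
    (Finset.univ.filter (fun r : Equiv.Perm (Fin n) => IsConj s r ∧ r.support = s.support)).card := by
  obtain ⟨g, hg⟩ : ∃ g : Equiv.Perm (Fin n), s.support.map g.toEmbedding = T := by
    let e := Finset.equivOfCardEq hT.symm
    refine ⟨Equiv.extendSubtype (p := (· ∈ s.support)) (q := (· ∈ T)) e, ?_⟩
    apply Finset.eq_of_subset_of_card_le
    · intro x hx
      obtain ⟨y, hy, rfl⟩ := Finset.mem_map.1 hx
      exact Equiv.extendSubtype_mem (p := (· ∈ s.support)) (q := (· ∈ T)) e y hy
    · rw [Finset.card_map, hT]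
  symm
  apply Finset.card_bij' (fun r _ => g * r * g⁻¹) (fun r _ => g⁻¹ * r * g)
  · intro r hr
    simp only [Finset.mem_filter, Finset.mem_univ, true_and] at hr ⊢
    refine ⟨hr.1.trans (isConj_iff.2 ⟨g, rfl⟩), ?_⟩
    rw [Equiv.Perm.support_conj, hr.2, hg]
  · intro r hr
    simp only [Finset.mem_filter, Finset.mem_univ, true_and] at hr ⊢
    refine ⟨hr.1.trans (isConj_iff.2 ⟨g⁻¹, by simp⟩), ?_⟩
    have : r = g * (g⁻¹ * r * g) * g⁻¹ := by group
    have h2 := hr.2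
    rw [this, Equiv.Perm.support_conj, ← hg] at h2
    exact Finset.map_injective _ h2
  · intro r hr; group
  · intro r hr; group

theorem class_eq {n : ℕ} (H : Subgroup (Equiv.Perm (Fin n)))
    (hH : H = ⊤ ∨ H = alternatingGroup (Fin n)) (s r : Equiv.Perm (Fin n)) 
    (hs : ∀ x, s (s x) = x) (hne : s ≠ 1) :
    (∃ g ∈ H, r = g⁻¹ * s * g) ↔ IsConj s r := by
  constructor
  · rintro ⟨g, -, rfl⟩
    exact isConj_iff.2 ⟨g⁻¹, by simp⟩
  · intro h
    obtain ⟨c, hc⟩ := isConj_iff.1 h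
    rcases hH with rfl | rfl
    · exact ⟨c⁻¹, trivial, by rw [← hc]; simp⟩
    · obtain ⟨a, ha⟩ : ∃ a, s a ≠ a := by
        by_contra hh
        push Not at hh
        exact hne (Equiv.ext hh)
      rcases Int.units_eq_one_or (Equiv.Perm.sign c) with h1 | h1
      · exact ⟨c⁻¹, by rw [Equiv.Perm.mem_alternatingGroup]; simp [h1], by rw [← hc]; simp⟩
      · refine ⟨Equiv.swap a (s a) * c⁻¹, ?_, ?_⟩
        · rw [Equiv.Perm.mem_alternatingGroup]
          simp [h1, Equiv.Perm.sign_swap ha.symm]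
        · have e : s * Equiv.swap a (s a) = Equiv.swap a (s a) * s := by
            have := Equiv.mul_swap_eq_swap_mul s a (s a)
            rw [hs, Equiv.swap_comm (s a) a] at this
            exact this
          rw [← hc, mul_inv_rev, inv_inv, Equiv.swap_inv]
          have : c * Equiv.swap a (s a) * s * (Equiv.swap a (s a) * c⁻¹)
            = c * (Equiv.swap a (s a) * (s * Equiv.swap a (s a))) * c⁻¹ := by group
          rw [this, e, ← mul_assoc (Equiv.swap a (s a)), Equiv.swap_mul_self, one_mul]



/-- For `n ≥ 7`, `G ∈ {Alt_n, Sym_n}`, `1 ≤ k ≤ 2√n/3` and an involution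
`s ∈ G` moving exactly `2k` points, among the elements of the conjugacy class `s^G` not
commuting with `s`, the proportion of those `r` with `(s·r)²` a `3`-cycle is at least `1/3`. -/
theorem proportion_nonCommuting_conjugates_threeCycle (n : ℕ) (hn : 7 ≤ n)
    (k : ℕ) (hk1 : 1 ≤ k) (hk2 : (k : ℝ) ≤ 2 * Real.sqrt n / 3)
    (H : Subgroup (Equiv.Perm (Fin n))) (hH : H = ⊤ ∨ H = alternatingGroup (Fin n))
    (s : Equiv.Perm (Fin n)) (hsH : s ∈ H) (hs : orderOf s = 2)
    (hsupp : s.support.card = 2 * k) :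
    1 / 3 ≤
      ((Finset.univ.filter (fun r : Equiv.Perm (Fin n) =>
          ((∃ g ∈ H, r = g⁻¹ * s * g) ∧ s * r ≠ r * s) ∧
            ((s * r) ^ 2).IsThreeCycle)).card : ℝ) /
        ((Finset.univ.filter (fun r : Equiv.Perm (Fin n) =>
          (∃ g ∈ H, r = g⁻¹ * s * g) ∧ s * r ≠ r * s)).card : ℝ) := by
  have hss : ∀ x, s (s x) = x := by
    intro x
    have h2 : s ^ 2 = 1 := by rw [← hs]; exact pow_orderOf_eq_one s
    have := congrArg (fun f : Equiv.Perm (Fin n) => f x) h2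
    simpa [pow_two] using this
  have hne : s ≠ 1 := by
    rintro rfl
    simp at hs
  have hconj : ∀ r, IsConj s r → (∀ x, r (r x) = x) ∧ r.support.card = 2 * k := by
    intro r hr
    obtain ⟨c, rfl⟩ := isConj_iff.1 hr
    refine ⟨fun x => by simp [hss], ?_⟩
    rw [Equiv.Perm.support_conj, Finset.card_map, hsupp]
  simp only [class_eq H hH s _ hss hne]
  set c := (Finset.univ.filter (fun r : Equiv.Perm (Fin n) =>
    IsConj s r ∧ r.support = s.support)).card with hc
  have hcpos : 0 < c := Finset.card_pos.2 ⟨s, by simp [IsConj.refl s, -isConj_iff]⟩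
  have hk3 : 9 * k^2 ≤ 4 * n := by
    have h0 : (3 * (k:ℝ)) ≤ 2 * Real.sqrt n := by linarith
    have h1 : (3 * (k:ℝ))^2 ≤ (2 * Real.sqrt n)^2 := by gcongr
    rw [mul_pow, mul_pow, Real.sq_sqrt (by positivity)] at h1
    norm_num at h1
    exact_mod_cast h1
  -- lower bound for the good elements
  set A := Finset.univ.filter (fun r : Equiv.Perm (Fin n) =>
          (IsConj s r ∧ s * r ≠ r * s) ∧ ((s * r) ^ 2).IsThreeCycle) with hA
  set B := Finset.univ.filter (fun r : Equiv.Perm (Fin n) =>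
          IsConj s r ∧ s * r ≠ r * s) with hB
  set F1 := Finset.univ.filter (fun T : Finset (Fin n) => T.card = 2*k ∧ (s.support ∩ T).card = 1)
    with hF1
  set F2 := Finset.univ.filter (fun T : Finset (Fin n) => T.card = 2*k ∧ ¬ Disjoint s.support T)
    with hF2
  have gen : ∀ F : Finset (Finset (Fin n)), (∀ T ∈ F, T.card = 2*k) →
      (Finset.univ.filter (fun r : Equiv.Perm (Fin n) => IsConj s r ∧ r.support ∈ F)).card
        = F.card * c := by
    intro F hF
    rw [Finset.card_eq_sum_card_fiberwise (f := fun r : Equiv.Perm (Fin n) => r.support) (t := F)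
      (by intro r hr; simp at hr; simpa using hr.2)]
    rw [Finset.sum_const_nat (m := c)]
    intro T hT
    rw [hc, ← fiber_const s T (by rw [hF T hT, hsupp]), Finset.filter_filter]
    congr 1
    ext r
    simp only [Finset.mem_filter, Finset.mem_univ, true_and]
    constructor
    · rintro ⟨⟨h1, h2⟩, h3⟩; exact ⟨h1, h3⟩
    · rintro ⟨h1, h3⟩; exact ⟨⟨h1, by rw [h3]; exact hT⟩, h3⟩
  have hAl : F1.card * c ≤ A.card := by
    rw [← gen F1 (by intro T hT; exact (Finset.mem_filter.1 hT).2.1)]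
    apply Finset.card_le_card
    intro r hr
    simp only [hF1, hA, Finset.mem_filter, Finset.mem_univ, true_and] at hr ⊢
    have h3 := threeCycle_of_inter s r hss (hconj r hr.1).1 hr.2.2
    refine ⟨⟨hr.1, ?_⟩, h3⟩
    intro hcomm
    have : (s * r)^2 = 1 := by
      ext x
      rw [pow_two]
      nth_rewrite 2 [hcomm]
      simp [hss, (hconj r hr.1).1]
    rw [this] at h3
    have := h3.card_support
    simp at this
  have hF1c := oneCount n (2*k) (by omega) s.support hsupp
  have hF2c := overlapCount n (2*k) s.support hsupp
  rw [← hF1] at hF1c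
  rw [← hF2] at hF2c
  have hmem2 : ∀ r ∈ B, r.support ∈ F2 := by
    intro r hr
    simp only [hF2, hB, Finset.mem_filter, Finset.mem_univ, true_and] at hr ⊢
    refine ⟨(hconj r hr.1).2, fun hd => hr.2 ?_⟩
    exact (Equiv.Perm.disjoint_iff_disjoint_support.2 hd).commute
  have hBA : B.card ≤ 3 * A.card := by
    by_cases hex : k = 2 ∧ n = 9
    · obtain ⟨rfl, rfl⟩ := hex
      have hBu : B.card ≤ (F2.erase s.support).card * c := by
        rw [← gen (F2.erase s.support) (by
          intro T hT; exact (Finset.mem_filter.1 (Finset.mem_of_mem_erase hT)).2.1)]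
        apply Finset.card_le_card
        intro r hr
        have h2 := hmem2 r hr
        simp only [hB, Finset.mem_filter, Finset.mem_univ, true_and] at hr
        simp only [Finset.mem_filter, Finset.mem_univ, true_and, Finset.mem_erase]
        refine ⟨hr.1, fun he => hr.2 ?_, h2⟩
        exact comm_of_four s r hss (hconj r hr.1).1 he.symm hsupp
      have hmem : s.support ∈ F2 := by
        simp only [hF2, Finset.mem_filter, Finset.mem_univ, true_and, disjoint_self]
        refine ⟨hsupp, fun hb => ?_⟩
        rw [hb] at hsupp
        simp at hsupp
      rw [Finset.card_erase_of_mem hmem] at hBu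
      have c1 : Nat.choose 9 (2*2) = 126 := by decide
      have c2 : Nat.choose (9-2*2) (2*2) = 5 := by decide
      have c3 : Nat.choose (9-2*2) (2*2-1) = 10 := by decide
      rw [c1, c2] at hF2c
      rw [c3] at hF1c
      have e : F2.card - 1 = 120 := by omega
      rw [e] at hBu
      have e2 : 40 * c ≤ F1.card * c := Nat.mul_le_mul_right c hF1c
      clear_value c A B F1 F2
      omega
    · have hnum := numBound n k hn hk1 hk3 hex
      have hBu : B.card ≤ F2.card * c := by
        rw [← gen F2 (by intro T hT; exact (Finset.mem_filter.1 hT).2.1)]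
        apply Finset.card_le_card
        intro r hr
        have h2 := hmem2 r hr
        simp only [hB, Finset.mem_filter, Finset.mem_univ, true_and] at hr
        simp only [Finset.mem_filter, Finset.mem_univ, true_and]
        exact ⟨hr.1, h2⟩
      have : F2.card ≤ 3 * F1.card := by
        rw [mul_assoc] at hnum
        omega
      calc B.card ≤ F2.card * c := hBu
        _ ≤ 3 * F1.card * c := by gcongr
        _ = 3 * (F1.card * c) := by ring
        _ ≤ 3 * A.card := by gcongr
  have h2 : 2 * (2*k) ≤ n := by
    by_cases hk1 : k = 1
    · omega
    · have : 2 ≤ k := by omega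
      by_contra hh
      have : n = 4 * k - 1 ∨ n < 4 * k - 1 := by omega
      nlinarith
  have hApos : 0 < A.card := by
    refine lt_of_lt_of_le ?_ hAl
    refine Nat.mul_pos (lt_of_lt_of_le ?_ hF1c) hcpos
    exact Nat.mul_pos (by omega) (Nat.choose_pos (by omega))
  have hAB : A.card ≤ B.card := by
    apply Finset.card_le_card
    intro r hr
    simp only [hA, hB, Finset.mem_filter, Finset.mem_univ, true_and] at hr ⊢
    exact hr.1
  have hBpos : (0:ℝ) < B.card := by exact_mod_cast lt_of_lt_of_le hApos hAB
  rw [div_le_div_iff₀ (by norm_num) hBpos]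
  have : (B.card : ℝ) ≤ 3 * A.card := by exact_mod_cast hBA
  linarith
end

section
/- Let t1, t2 ∈ Sym_n be involutions such that |supp t1 ∩ supp t2| = 1, i.e., t1 and t2 move exactly one common point. Then (t1·t2)² is a 3-cycle. -/
/-- If `t₁, t₂ ∈ Sym_n` are involutions moving exactly one common point,
then `(t₁·t₂)²` is a `3`-cycle. -/
theorem sq_mul_involutions_isThreeCycle (n : ℕ) (t₁ t₂ : Equiv.Perm (Fin n))
    (h₁ : orderOf t₁ = 2) (h₂ : orderOf t₂ = 2)
    (h : (t₁.support ∩ t₂.support).card = 1) :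
    ((t₁ * t₂) ^ 2).IsThreeCycle := by
  obtain ⟨a, ha⟩ := Finset.card_eq_one.mp h
  have i₁ : ∀ x, t₁ (t₁ x) = x := fun x => by
    have := pow_orderOf_eq_one t₁
    rw [h₁, pow_two] at this
    simpa using congrArg (fun f => f x) this
  have i₂ : ∀ x, t₂ (t₂ x) = x := fun x => by
    have := pow_orderOf_eq_one t₂
    rw [h₂, pow_two] at this
    simpa using congrArg (fun f => f x) this
  have hu : ∀ x, (t₁ x ≠ x ∧ t₂ x ≠ x) ↔ x = a := fun x => by
    have := Finset.ext_iff.mp ha x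
    simpa using this
  obtain ⟨ha1, ha2⟩ := (hu a).mpr rfl
  have hb : t₂ (t₁ a) = t₁ a := by
    by_contra hc
    exact ha1 ((hu _).mp ⟨by rw [i₁]; exact ha1.symm, hc⟩)
  have hc : t₁ (t₂ a) = t₂ a := by
    by_contra hc
    exact ha2 ((hu _).mp ⟨hc, by rw [i₂]; exact ha2.symm⟩)
  have hbc : t₁ a ≠ t₂ a := fun e => ha2 (by rw [← hc, ← e, i₁])
  rw [← card_support_eq_three_iff]
  have hs : ((t₁ * t₂) ^ 2).support = {a, t₁ a, t₂ a} := by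
    ext x
    have e : ((t₁ * t₂) ^ 2) x = t₁ (t₂ (t₁ (t₂ x))) := by simp [pow_two]
    simp only [Equiv.Perm.mem_support, Finset.mem_insert, Finset.mem_singleton, e]
    constructor
    · intro hx
      by_contra! hn
      obtain ⟨n1, n2, n3⟩ := hn
      apply hx
      by_cases k2 : t₂ x = x
      · by_cases k1 : t₁ x = x
        · simp [k1, k2]
        · have : t₂ (t₁ x) = t₁ x := by
            by_contra k
            have := (hu (t₁ x)).mp ⟨by rw [i₁]; exact Ne.symm k1, k⟩
            exact n2 (by rw [← this, i₁])
          rw [k2, this, i₁]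
      · have k1 : t₁ x = x := by
          by_contra k1
          exact n1 ((hu x).mp ⟨k1, k2⟩)
        have : t₁ (t₂ x) = t₂ x := by
          by_contra k
          have := (hu (t₂ x)).mp ⟨k, by rw [i₂]; exact Ne.symm k2⟩
          exact n3 (by rw [← this, i₂])
        rw [this, i₂, k1]
    · rintro (rfl | rfl | rfl)
      · rw [hc, i₂]; exact ha1
      · rw [hb, i₁, hc]; exact hbc.symm
      · rw [i₂, hb, i₁]; exact ha2.symm
  rw [hs]
  exact Finset.card_eq_three.mpr ⟨_, _, _, ha1.symm, ha2.symm, hbc, rfl⟩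
end

section
/- For natural numbers n ≥ 1 and b ≥ 1, let t_b(bn) denote the proportion of permutations in Sym_{bn} all of whose cycle lengths are multiples of b but none of whose cycle lengths is a multiple of 2b. Then t_b(bn) ≥ 1/(b² · 3^{1/(2b)} · n^{1−1/(2b)}). -/
open scoped Classical


theorem tb_growth (b : ℕ) (hb : 1 ≤ b) (v : ℕ → ℝ) (h0 : 0 ≤ v 0) (h1 : 1 ≤ v 1)
    (hr : ∀ n, v n + v (n+1) / (b * (n+1)) ≤ v (n+2)) (n : ℕ) :
    1 / (b:ℝ) * (((n:ℝ)+2)/3) ^ (1 / (2 * (b : ℝ))) ≤ v (n+1) ∧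
    1 / (b:ℝ) * (((n:ℝ)+3)/3) ^ (1 / (2 * (b : ℝ))) ≤ v (n+2) := by
  have hb' : (1:ℝ) ≤ b := by exact_mod_cast hb
  have ha0 : 0 ≤ 1 / (2 * (b : ℝ)) := by positivity
  have ha1 : 1 / (2 * (b : ℝ)) ≤ 1 := by
    rw [div_le_one (by positivity)]; linarith
  have hab : 1 / (2 * (b : ℝ)) * 2 = 1 / b := by field_simp
  generalize 1 / (2 * (b : ℝ)) = a at *
  induction n with
  | zero =>
    constructor
    · have : (((0:ℕ):ℝ)+2)/3 ≤ 1 := by norm_num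
      have := Real.rpow_le_one (by norm_num) this ha0
      have h2 : 1 / (b:ℝ) ≤ 1 := by rw [div_le_one (by positivity)]; linarith
      calc _ ≤ 1 * (1:ℝ) := by gcongr
        _ ≤ _ := by simpa using h1
    · have := hr 0
      norm_num at this ⊢
      have h3 : (b:ℝ)⁻¹ ≤ v 1 / b := by
        rw [inv_eq_one_div]; gcongr
      linarith
  | succ n ih =>
    obtain ⟨ih1, ih2⟩ := ih
    push_cast
    constructor
    · convert ih2 using 3; ring
    · have h := hr (n+1)
      have hx : (0:ℝ) < (n+2)/3 := by positivity
      have hB := rpow_one_add_le_one_add_mul_self (s := 2/((n:ℝ)+2)) (p := a)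
        (by have : (0:ℝ) ≤ 2/((n:ℝ)+2) := by positivity
            linarith) ha0 ha1
      have e1 : ((n:ℝ)+1+3)/3 = ((n+2)/3) * (1 + 2/((n:ℝ)+2)) := by field_simp; ring
      have e2 : (((n:ℝ)+1+3)/3)^a ≤ ((n+2)/3)^a * (1 + a * (2/((n:ℝ)+2))) := by
        rw [e1, Real.mul_rpow hx.le (by positivity)]
        gcongr
      have e3 : (((n:ℝ)+2)/3)^a ≤ (((n:ℝ)+3)/3)^a := by
        gcongr; norm_num
      have e4 : v (n+2) / (b * ((n+1:ℕ)+1)) ≥ 1 / (b:ℝ) * (((n:ℝ)+2)/3)^a * (a * (2/((n:ℝ)+2))) := by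
        have : a * (2/((n:ℝ)+2)) = 1 / (b * ((n+1:ℕ)+1)) := by
          rw [mul_div_assoc', hab]; push_cast; field_simp; ring
        rw [this, mul_one_div]
        gcongr
        refine le_trans ?_ ih2
        gcongr
      have : 1 / (b:ℝ) * (((n:ℝ)+1+3)/3)^a ≤ 1 / (b:ℝ) * (((n+2)/3)^a * (1 + a * (2/((n:ℝ)+2)))) := by
        gcongr
      have e5 : n + 1 + 1 = n + 2 := rfl
      have e6 : n + 1 + 2 = n + 2 + 1 := rfl
      rw [e5] at h
      linarith

theorem tb_card_cycles (β : Type) [Fintype β] [Nonempty β] :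
    (Fintype.card β - 1).factorial ≤
      (Finset.univ.filter (fun τ : Equiv.Perm β => ∀ x y, τ.SameCycle x y)).card := by
  rcases Nat.lt_or_ge (Fintype.card β) 2 with h | h
  · have : Fintype.card β = 1 := by have := Fintype.card_pos (α := β); omega
    rw [this]
    have := Fintype.card_le_one_iff_subsingleton.mp this.le
    simp only [Nat.sub_self, Nat.factorial_zero]
    apply Finset.card_pos.mpr
    refine ⟨1, by simp⟩
    
  · have := Equiv.Perm.card_of_cycleType_singleton (α := β) h le_rfl
    rw [Nat.choose_self, mul_one] at this
    rw [← this]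
    apply Finset.card_le_card
    intro τ
    simp only [Finset.mem_filter, Finset.mem_univ, true_and]
    intro hτ x y
    have hc : τ.IsCycle := by rw [← Equiv.Perm.card_cycleType_eq_one, hτ]; simp
    have hs : τ.support = Finset.univ := by
      rw [← Finset.card_eq_iff_eq_univ, ← Equiv.Perm.sum_cycleType, hτ]; simp
    have hx : ∀ x, τ x ≠ x := fun x => by rw [← Equiv.Perm.mem_support, hs]; simp
    exact hc.sameCycle (hx x) (hx y)

/-- number of permutations with all cycle lengths in `S` -/
noncomputable def tbCnt (S : Set ℕ) (α : Type) : ℕ :=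
  Nat.card {σ : Equiv.Perm α // ∀ x, Function.minimalPeriod σ x ∈ S}

theorem tbCnt_congr (S : Set ℕ) {α β : Type} (e : α ≃ β) : tbCnt S α = tbCnt S β := by
  refine Nat.card_congr (Equiv.subtypeEquiv e.permCongr ?_)
  intro σ
  have key : ∀ x, Function.minimalPeriod (e.permCongr σ) (e x) = Function.minimalPeriod σ x := by
    intro x
    rw [Function.minimalPeriod_eq_minimalPeriod_iff]
    intro n
    have h : ∀ n, (e.permCongr σ)^[n] (e x) = e (σ^[n] x) := by
      intro n
      induction n with
      | zero => rfl
      | succ n ih => rw [Function.iterate_succ_apply', ih, Function.iterate_succ_apply']; simp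
    simp only [Function.IsPeriodicPt, Function.IsFixedPt, h, e.injective.eq_iff]
  constructor
  · intro h y
    rw [← e.apply_symm_apply y, key]; exact h _
  · intro h x
    rw [← key]; exact h _

theorem tb_glue_zpow {α : Type} (s : Finset α) (τ : Equiv.Perm {a // a ∈ s})
    (π : Equiv.Perm {a // a ∉ s}) (k : ℤ) :
    (τ.subtypeCongr π) ^ k = (τ ^ k).subtypeCongr (π ^ k) :=
  (map_zpow (Equiv.Perm.subtypeCongrHom (fun a => a ∈ s)) (τ, π) k).symm

theorem tb_glue_pow {α : Type} (s : Finset α) (τ : Equiv.Perm {a // a ∈ s})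
    (π : Equiv.Perm {a // a ∉ s}) (k : ℕ) :
    (τ.subtypeCongr π) ^ k = (τ ^ k).subtypeCongr (π ^ k) :=
  (map_pow (Equiv.Perm.subtypeCongrHom (fun a => a ∈ s)) (τ, π) k).symm

theorem tb_glue_mem {α : Type} (s : Finset α) (τ : Equiv.Perm {a // a ∈ s})
    (π : Equiv.Perm {a // a ∉ s}) (hτ : ∀ x y, τ.SameCycle x y) (x : α) (hx : x ∈ s) (y : α) :
    y ∈ s ↔ (τ.subtypeCongr π).SameCycle x y := by
  constructor
  · intro hy
    obtain ⟨k, hk⟩ := hτ ⟨x, hx⟩ ⟨y, hy⟩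
    refine ⟨k, ?_⟩
    rw [tb_glue_zpow, Equiv.Perm.subtypeCongr.left_apply _ _ hx, hk]
  · rintro ⟨k, rfl⟩
    rw [tb_glue_zpow, Equiv.Perm.subtypeCongr.left_apply _ _ hx]
    exact Subtype.prop _

theorem tb_glue_period_in {α : Type} (s : Finset α) (τ : Equiv.Perm {a // a ∈ s})
    (π : Equiv.Perm {a // a ∉ s}) (hτ : ∀ x y, τ.SameCycle x y) (x : α) (hx : x ∈ s) :
    Function.minimalPeriod (τ.subtypeCongr π) x = s.card := by
  have hc : (τ.subtypeCongr π).IsCycleOn (s : Set α) := by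
    refine ⟨⟨?_, (Equiv.injective _).injOn, ?_⟩, ?_⟩
    · intro y hy
      rw [Equiv.Perm.subtypeCongr.left_apply _ _ hy]; exact Subtype.prop _
    · intro y hy
      refine ⟨τ.symm ⟨y, hy⟩, Subtype.prop _, ?_⟩
      rw [Equiv.Perm.subtypeCongr.left_apply_subtype]; simp
    · intro y hy z hz
      exact (tb_glue_mem s τ π hτ y hy z).1 hz
  apply Nat.dvd_antisymm
  · rw [← Function.isPeriodicPt_iff_minimalPeriod_dvd, Function.IsPeriodicPt, Function.IsFixedPt,
      Equiv.Perm.iterate_eq_pow, hc.pow_apply_eq hx]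
  · rw [← hc.pow_apply_eq hx, ← Equiv.Perm.iterate_eq_pow]
    exact Function.isPeriodicPt_minimalPeriod _ _

theorem tb_glue_period_out {α : Type} (s : Finset α) (τ : Equiv.Perm {a // a ∈ s})
    (π : Equiv.Perm {a // a ∉ s}) (x : α) (hx : x ∉ s) :
    Function.minimalPeriod (τ.subtypeCongr π) x = Function.minimalPeriod π ⟨x, hx⟩ := by
  rw [Function.minimalPeriod_eq_minimalPeriod_iff]
  intro n
  simp only [Function.IsPeriodicPt, Function.IsFixedPt, Equiv.Perm.iterate_eq_pow, tb_glue_pow]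
  rw [Equiv.Perm.subtypeCongr.right_apply _ _ hx, Subtype.ext_iff]

theorem tb_rec_sets (S : Set ℕ) (α : Type) [Fintype α] (x0 : α) :
    ∑ s : Finset α, Nat.card {τ : Equiv.Perm {a // a ∈ s} //
      (x0 ∈ s ∧ s.card ∈ S) ∧ ∀ x y, τ.SameCycle x y} * tbCnt S {a // a ∉ s} ≤ tbCnt S α := by
  unfold tbCnt
  simp only [← Nat.card_prod]
  rw [← Nat.card_sigma]
  refine Nat.card_le_card_of_injective
    (fun p => ⟨(p.2.1.1).subtypeCongr p.2.2.1, ?_⟩) ?_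
  · intro x
    obtain ⟨s, ⟨τ, ⟨h0, hS⟩, hτ⟩, π, hπ⟩ := p
    by_cases hx : x ∈ s
    · rw [tb_glue_period_in s τ π hτ x hx]; exact hS
    · rw [tb_glue_period_out s τ π x hx]; exact hπ _
  · rintro ⟨s, ⟨τ, ⟨h0, hS⟩, hτ⟩, π, hπ⟩ ⟨s', ⟨τ', ⟨h0', hS'⟩, hτ'⟩, π', hπ'⟩ h
    have h' : τ.subtypeCongr π = τ'.subtypeCongr π' := congrArg Subtype.val h
    have hs : s = s' := by
      ext y
      rw [tb_glue_mem s τ π hτ x0 h0, tb_glue_mem s' τ' π' hτ' x0 h0', h']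
    subst hs
    have h2 : (τ, π) = (τ', π') := Equiv.Perm.subtypeCongrHom_injective (fun a => a ∈ s) h'
    obtain ⟨rfl, rfl⟩ := Prod.mk.inj h2
    rfl

theorem tb_rec_nat (S : Set ℕ) (m : ℕ) :
    ∑ j ∈ Finset.range (m+1), m.choose j * (if j + 1 ∈ S then j.factorial * tbCnt S (Fin (m - j)) else 0)
      ≤ tbCnt S (Fin (m+1)) := by
  refine le_trans ?_ (tb_rec_sets S (Fin (m+1)) 0)
  have hcard : ((Finset.univ : Finset (Fin (m+1))).erase 0).card = m := by simp
  have := Finset.sum_powerset_apply_card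
    (fun j => if j + 1 ∈ S then j.factorial * tbCnt S (Fin (m - j)) else 0)
    (x := (Finset.univ : Finset (Fin (m+1))).erase 0)
  rw [hcard] at this
  simp only [smul_eq_mul] at this
  rw [← this]
  have hinj : Set.InjOn (fun s : Finset (Fin (m+1)) => insert 0 s)
      ((Finset.univ : Finset (Fin (m+1))).erase 0).powerset := by
    intro s hs t ht h
    have h1 : (0 : Fin (m+1)) ∉ s := fun hh => by simpa using Finset.mem_powerset.1 hs hh
    have h2 : (0 : Fin (m+1)) ∉ t := fun hh => by simpa using Finset.mem_powerset.1 ht hh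
    rw [← Finset.erase_insert h1, ← Finset.erase_insert h2]
    exact congrArg (fun u => Finset.erase u 0) h
  refine le_trans ?_ (Finset.sum_le_sum_of_subset (Finset.subset_univ
    (((Finset.univ : Finset (Fin (m+1))).erase 0).powerset.image (fun s => insert 0 s))))
  rw [Finset.sum_image hinj]
  apply Finset.sum_le_sum
  intro s hs
  have h1 : (0 : Fin (m+1)) ∉ s := fun hh => by simpa using Finset.mem_powerset.1 hs hh
  have h2 : (insert 0 s).card = s.card + 1 := Finset.card_insert_of_notMem h1
  split_ifs with hS
  · apply Nat.mul_le_mul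
    · have : Nonempty {a // a ∈ insert 0 s} := ⟨⟨0, by simp⟩⟩
      have := tb_card_cycles {a // a ∈ insert 0 s}
      rw [Fintype.card_coe, h2, Nat.add_sub_cancel] at this
      refine this.trans (le_of_eq ?_)
      rw [h2]
      simp only [Finset.mem_insert_self, hS, true_and]
      rw [Nat.card_eq_fintype_card, Fintype.card_subtype]
      congr!
    · apply le_of_eq
      apply tbCnt_congr
      apply Fintype.equivOfCardEq
      rw [Fintype.card_fin, Fintype.card_subtype_compl, Fintype.card_coe, h2, Fintype.card_fin]
      omega
  · exact Nat.zero_le _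

theorem tb_rec_real (S : Set ℕ) (m : ℕ) :
    ∑ j ∈ Finset.range (m+1), (if j + 1 ∈ S then
      (tbCnt S (Fin (m - j)) : ℝ) / (m-j).factorial else 0)
      ≤ (m + 1) * ((tbCnt S (Fin (m+1)) : ℝ) / (m+1).factorial) := by
  have h := tb_rec_nat S m
  have h' : ((∑ j ∈ Finset.range (m+1), m.choose j *
    (if j + 1 ∈ S then j.factorial * tbCnt S (Fin (m - j)) else 0) : ℕ) : ℝ)
      ≤ (tbCnt S (Fin (m+1)) : ℝ) := by exact_mod_cast h
  have e : (m + 1) * ((tbCnt S (Fin (m+1)) : ℝ) / (m+1).factorial)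
      = (tbCnt S (Fin (m+1)) : ℝ) / m.factorial := by
    rw [Nat.factorial_succ]; push_cast
    have : (m.factorial : ℝ) ≠ 0 := by positivity
    field_simp
  rw [e, le_div_iff₀ (by positivity)]
  refine le_trans (le_of_eq ?_) h'
  push_cast
  rw [Finset.sum_mul]
  apply Finset.sum_congr rfl
  intro j hj
  have hj' : j ≤ m := by simpa [Nat.lt_succ_iff] using hj
  split_ifs
  · rw [← Nat.choose_mul_factorial_mul_factorial hj']
    push_cast
    have : ((m-j).factorial : ℝ) ≠ 0 := by positivity
    field_simp
  · simp

/-- partial sums -/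
noncomputable def tbV (q : ℕ → ℝ) : ℕ → ℝ
  | 0 => 0
  | 1 => q 0
  | (n+2) => tbV q n + q (n+1)

theorem tbV_eq (q : ℕ → ℝ) (n : ℕ) :
    tbV q n = ∑ i ∈ Finset.range n, if Odd (n - i) then q i else 0 := by
  induction n using Nat.strong_induction_on with
  | _ n ih =>
    match n with
    | 0 => simp [tbV]
    | 1 => simp [tbV]
    | n+2 =>
      rw [tbV, ih n (by omega), Finset.sum_range_succ, Finset.sum_range_succ]
      have e1 : n + 2 - (n+1) = 1 := by omega
      have e2 : n + 2 - n = 2 := by omega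
      rw [e1, e2, if_pos odd_one, if_neg (by decide), add_zero]
      congr 1
      apply Finset.sum_congr rfl
      intro i hi
      have : i < n := by simpa using hi
      have e3 : n + 2 - i = (n - i) + 2 := by omega
      rw [e3]
      simp [Nat.odd_add]

theorem tb_rec_b (b : ℕ) (hb : 1 ≤ b) (n : ℕ) (hn : 1 ≤ n) (q : ℕ → ℝ)
    (hq : ∀ n, q n = (tbCnt {l | b ∣ l ∧ ¬ (2 * b ∣ l)} (Fin (b * n)) : ℝ) / (b * n).factorial) :
    tbV q n ≤ b * n * q n := by
  obtain ⟨m, hm⟩ : ∃ m, b * n = m + 1 := ⟨b * n - 1, by have := Nat.mul_pos hb hn; omega⟩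
  have h := tb_rec_real {l | b ∣ l ∧ ¬ (2 * b ∣ l)} m
  have e : (b:ℝ) * n = m + 1 := by exact_mod_cast hm
  rw [hq n, e, hm]
  refine le_trans ?_ h
  rw [tbV_eq, ← Finset.sum_range_reflect]
  have hlt : ∀ i ∈ Finset.range n, b * i + (b - 1) < m + 1 := by
    intro i hi
    have hi : i < n := by simpa using hi
    have : b * (i+1) ≤ b * n := Nat.mul_le_mul_left _ hi
    rw [Nat.mul_add] at this
    omega
  have hinj : Set.InjOn (fun i => b * i + (b - 1)) (Finset.range n : Set ℕ) := by
    intro i _ j _ hij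
    have : b * i = b * j := by simpa using hij
    exact Nat.eq_of_mul_eq_mul_left hb this
  refine le_trans ?_ (Finset.sum_le_sum_of_subset_of_nonneg
    (s := (Finset.range n).image (fun i => b * i + (b - 1))) ?_ ?_)
  · rw [Finset.sum_image hinj]
    apply Finset.sum_le_sum
    intro i hi
    have hi' : i < n := by simpa using hi
    have e1 : b * i + (b - 1) + 1 = b * (i + 1) := by rw [Nat.mul_add]; omega
    have e2 : n - (n - 1 - i) = i + 1 := by omega
    have e3 : m - (b * i + (b - 1)) = b * (n - 1 - i) := by
      have : b * n = b * (n - 1 - i) + b * (i + 1) := by rw [← Nat.mul_add]; congr 1; omega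
      omega
    have e4 : Odd (i+1) ↔ b * (i+1) ∈ {l | b ∣ l ∧ ¬ (2 * b ∣ l)} := by
      simp only [Set.mem_ofPred_eq, dvd_mul_right, true_and]
      rw [mul_comm 2 b, Nat.mul_dvd_mul_iff_left hb, ← even_iff_two_dvd, Nat.not_even_iff_odd]
    rw [e1, e2, e3, hq]
    by_cases ho : Odd (i + 1)
    · rw [if_pos ho, if_pos (e4.1 ho)]
    · rw [if_neg ho, if_neg (fun hh => ho (e4.2 hh))]
  · intro j hj
    obtain ⟨i, hi, rfl⟩ := Finset.mem_image.1 hj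
    exact Finset.mem_range.2 (hlt i hi)
  · intros
    split_ifs <;> positivity

/-- For `n, b ≥ 1`, the proportion `t_b(bn)` of permutations of `Sym_{bn}`
all of whose cycle lengths are divisible by `b` but none by `2b` satisfies
`t_b(bn) ≥ 1/(b² · 3^{1/(2b)} · n^{1-1/(2b)})`.  The cycle length of the point `x` under `σ`
is `Function.minimalPeriod σ x` (fixed points have cycle length `1`). -/
theorem tb_lower_bound (n b : ℕ) (hn : 1 ≤ n) (hb : 1 ≤ b) :
    1 / ((b : ℝ) ^ 2 * (3 : ℝ) ^ (1 / (2 * (b : ℝ))) * (n : ℝ) ^ (1 - 1 / (2 * (b : ℝ)))) ≤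
      ((Finset.univ.filter (fun σ : Equiv.Perm (Fin (b * n)) =>
          ∀ x, b ∣ Function.minimalPeriod σ x ∧ ¬ (2 * b ∣ Function.minimalPeriod σ x))).card : ℝ)
        / (Nat.factorial (b * n) : ℝ) := by
  let q : ℕ → ℝ := fun n =>
    (tbCnt {l | b ∣ l ∧ ¬ (2 * b ∣ l)} (Fin (b * n)) : ℝ) / (b * n).factorial
  have hq : ((Finset.univ.filter (fun σ : Equiv.Perm (Fin (b * n)) =>
          ∀ x, b ∣ Function.minimalPeriod σ x ∧ ¬ (2 * b ∣ Function.minimalPeriod σ x))).card : ℝ)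
        / (Nat.factorial (b * n) : ℝ) = q n := by
    simp only [q, tbCnt]
    rw [Nat.card_eq_fintype_card, Fintype.card_subtype]
    rfl
  rw [hq]
  have hrec := fun n hn => tb_rec_b b hb n hn q (fun _ => rfl)
  have hb0 : (0:ℝ) < b := by exact_mod_cast hb
  have hn0 : (0:ℝ) < n := by exact_mod_cast hn
  have hq0 : q 0 = 1 := by
    simp only [q, tbCnt]
    have : ∀ k, k = 0 → (Nat.card {σ : Equiv.Perm (Fin k) // ∀ x, Function.minimalPeriod σ x ∈
        {l | b ∣ l ∧ ¬ (2 * b ∣ l)}} : ℝ) / k.factorial = 1 := by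
      rintro k rfl
      simp
    exact this _ (Nat.mul_zero b)
  have hg := tb_growth b hb (tbV q) (by simp [tbV]) (by simp [tbV, hq0]) (by
    intro k
    have := hrec (k+1) (by omega)
    rw [tbV]
    gcongr
    rw [div_le_iff₀ (by positivity)]
    push_cast at this
    linarith) (n - 1)
  obtain ⟨hg, -⟩ := hg
  rw [Nat.sub_add_cancel hn, Nat.cast_sub hn] at hg
  have h2 := hg.trans (hrec n hn)
  generalize ha : 1 / (2 * (b : ℝ)) = a at *
  have ha0 : 0 ≤ a := by rw [← ha]; positivity
  have h3 : 1 / (b:ℝ) * ((n:ℝ)/3)^a ≤ b * n * q n := by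
    refine le_trans ?_ h2
    gcongr
    push_cast; linarith
  rw [Real.div_rpow hn0.le (by norm_num)] at h3
  rw [Real.rpow_sub hn0, Real.rpow_one, div_le_iff₀ (by positivity)]
  have p1 : (0:ℝ) < (n:ℝ)^a := by positivity
  have p2 : (0:ℝ) < (3:ℝ)^a := by positivity
  calc (1:ℝ) = (1 / (b:ℝ) * ((n:ℝ)^a / 3^a)) * (b * 3^a / (n:ℝ)^a) := by field_simp
    _ ≤ (b * n * q n) * (b * 3^a / (n:ℝ)^a) := by gcongr
    _ = _ := by field_simp
end

section
/- Let n ≥ 404 be a natural number and set b := 2^{⌈log₂((1/3)·log n)⌉}, where log is the natural logarithm. Then u_b(n) ≥ 1/(16 log n) and u_{2b}(n) ≥ 1/(21 log n). -/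
open scoped Classical

/-- `ubProp b n σ` says: there is an integer `j` with `1 ≤ j ≤ 4√n/(3b)` such that exactly
`j·b` points of `{1,…,n}` lie in cycles of `σ` of length divisible by `b` but not by `2b`,
and the remaining points lie in cycles of length not divisible by `b`.  The cycle length of
the point `x` under `σ` is `Function.minimalPeriod σ x`. -/
def ubProp (b n : ℕ) (σ : Equiv.Perm (Fin n)) : Prop :=
  ∃ j : ℕ, 1 ≤ j ∧ (j : ℝ) ≤ 4 * Real.sqrt n / (3 * (b : ℝ)) ∧
    (Finset.univ.filter (fun x : Fin n =>
        b ∣ Function.minimalPeriod σ x ∧ ¬ (2 * b ∣ Function.minimalPeriod σ x))).card = j * b ∧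
    ∀ x : Fin n,
      ¬ (b ∣ Function.minimalPeriod σ x ∧ ¬ (2 * b ∣ Function.minimalPeriod σ x)) →
        ¬ (b ∣ Function.minimalPeriod σ x)

/-- `ub b n` is the proportion of permutations in `Sym_n` satisfying `ubProp b n`. -/
noncomputable def ub (b n : ℕ) : ℝ :=
  ((Finset.univ.filter (fun σ : Equiv.Perm (Fin n) => ubProp b n σ)).card : ℝ) /
    (Nat.factorial n : ℝ)


lemma mp_pos {α : Type} [Fintype α] (σ : Equiv.Perm α) (x : α) :
    x ∈ Function.periodicPts σ := by
  refine Function.mk_mem_periodicPts (orderOf_pos σ) ?_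
  have h : σ ^ orderOf σ = 1 := pow_orderOf_eq_one σ
  unfold Function.IsPeriodicPt Function.IsFixedPt
  rw [← Equiv.Perm.coe_pow, h]; rfl

/-- the finset of points of the orbit of `x` -/
noncomputable def orb {α : Type} (σ : Equiv.Perm α) (x : α) : Finset α :=
  (Finset.range (Function.minimalPeriod σ x)).image (fun i => σ^[i] x)

lemma orb_card {α : Type} (σ : Equiv.Perm α) (x : α) :
    (orb σ x).card = Function.minimalPeriod σ x := by
  unfold orb
  rw [Finset.card_image_of_injOn, Finset.card_range]
  have := Function.iterate_injOn_Iio_minimalPeriod (f := σ) (x := x)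
  intro i hi j hj h
  exact this (by simpa using hi) (by simpa using hj) h

lemma mem_orb {α : Type} [Fintype α] (σ : Equiv.Perm α) (x y : α) :
    y ∈ orb σ x ↔ ∃ i : ℕ, σ^[i] x = y := by
  unfold orb
  simp only [Finset.mem_image, Finset.mem_range]
  constructor
  · rintro ⟨i, _, h⟩; exact ⟨i, h⟩
  · rintro ⟨i, h⟩
    refine ⟨i % Function.minimalPeriod σ x, Nat.mod_lt _ ?_, ?_⟩
    · exact Function.minimalPeriod_pos_of_mem_periodicPts (mp_pos σ x)
    · rw [Function.iterate_mod_minimalPeriod_eq, h]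

lemma mp_of_mem_orb {α : Type} [Fintype α] {σ : Equiv.Perm α} {x y : α} (h : y ∈ orb σ x) :
    Function.minimalPeriod σ y = Function.minimalPeriod σ x := by
  obtain ⟨i, rfl⟩ := (mem_orb σ x y).1 h
  exact Function.minimalPeriod_apply_iterate (mp_pos σ x) i

/-- number of full cycles -/
lemma full_cycles {β : Type} [Fintype β] (a : β) (d : ℕ) (hd : Fintype.card β = d) :
    (d - 1).factorial ≤
      (Finset.univ.filter (fun σ : Equiv.Perm β => Function.minimalPeriod σ a = d)).card := by
  have hd0 : 0 < d := hd ▸ Fintype.card_pos_iff.2 ⟨a⟩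
  rcases Nat.lt_or_ge d 2 with h2 | h2
  · obtain rfl : d = 1 := by omega
    have : Subsingleton β := Fintype.card_le_one_iff_subsingleton.1 hd.le
    simp only [Nat.sub_self, Nat.factorial_zero, Nat.one_le_iff_ne_zero]
    apply Finset.card_ne_zero_of_mem (a := 1)
    simp [Function.IsFixedPt]
  · have h := Equiv.Perm.card_of_cycleType_singleton (α := β) h2 hd.ge
    rw [hd, Nat.choose_self, mul_one] at h
    rw [← h]
    apply Finset.card_le_card
    intro σ hσ
    simp only [Finset.mem_filter, Finset.mem_univ, true_and] at hσ ⊢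
    have hc : σ.IsCycle := by
      rw [← Equiv.Perm.card_cycleType_eq_one, hσ]; simp
    have hs : σ.support.card = d := by
      rw [← Equiv.Perm.sum_cycleType, hσ]; simp
    have hu : σ.support = Finset.univ := by
      rw [← Finset.card_eq_iff_eq_univ, hs, hd]
    have ho := hc.orderOf
    rw [hs] at ho
    have ha : σ a ≠ a := by
      have : a ∈ σ.support := by rw [hu]; simp
      simpa using this
    rw [← ho]
    apply Nat.dvd_antisymm
    · rw [← Function.isPeriodicPt_iff_minimalPeriod_dvd]
      unfold Function.IsPeriodicPt Function.IsFixedPt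
      rw [← Equiv.Perm.coe_pow, pow_orderOf_eq_one]; rfl
    · rw [orderOf_dvd_iff_pow_eq_one, hc.pow_eq_one_iff]
      refine ⟨a, ha, ?_⟩
      rw [Equiv.Perm.coe_pow]
      exact Function.iterate_minimalPeriod

lemma mp_sub {α β : Type} {f : α → α} {g : β → β} (v : α → β) (hv : Function.Injective v)
    (h : Function.Semiconj v f g) (x : α) :
    Function.minimalPeriod g (v x) = Function.minimalPeriod f x := by
  rw [Function.minimalPeriod_eq_minimalPeriod_iff]
  intro n
  unfold Function.IsPeriodicPt Function.IsFixedPt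
  rw [← (h.iterate_right n).eq]
  exact hv.eq_iff

/-- permutations without cycles of length divisible by `b` -/
noncomputable def good (b : ℕ) (α : Type) [Fintype α] : Finset (Equiv.Perm α) :=
  Finset.univ.filter (fun σ => ∀ x, ¬ b ∣ Function.minimalPeriod σ x)

/-- permutations where `a` has cycle length `d` and no other cycle has length divisible by `b` -/
noncomputable def goodAt (b : ℕ) (α : Type) [Fintype α] (a : α) (d : ℕ) :
    Finset (Equiv.Perm α) :=
  Finset.univ.filter (fun σ => Function.minimalPeriod σ a = d ∧
    ∀ x, b ∣ Function.minimalPeriod σ x → x ∈ orb σ a)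

/-- those with prescribed orbit -/
lemma goodOrb (b : ℕ) (α : Type) [Fintype α] (a : α) (S : Finset α) (ha : a ∈ S) (K : ℕ)
    (hK : K ≤ (good b {x // ¬ x ∈ S}).card) :
    (S.card - 1).factorial * K ≤
      ((goodAt b α a S.card).filter (fun σ => orb σ a = S)).card := by
  have h1 := full_cycles (⟨a, ha⟩ : {x // x ∈ S}) S.card (by simp)
  refine (Nat.mul_le_mul h1 hK).trans ?_
  rw [← Finset.card_product]
  refine Finset.card_le_card_of_injOn (Equiv.Perm.subtypeCongrHom (fun x => x ∈ S)) ?_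
    (Equiv.Perm.subtypeCongrHom_injective _).injOn
  rintro ⟨e, f⟩ hef
  simp only [good, Finset.coe_product, Set.mem_prod, Finset.mem_coe, Finset.mem_filter,
    Finset.mem_univ, true_and] at hef
  obtain ⟨he, hf⟩ := hef
  set σ := Equiv.Perm.subtypeCongrHom (fun x => x ∈ S) (e, f) with hσ
  have s1 : Function.Semiconj (Subtype.val : {x // x ∈ S} → α) e σ := by
    intro x
    simp [hσ]
  have s2 : Function.Semiconj (Subtype.val : {x // ¬ x ∈ S} → α) f σ := by
    intro x
    simp [hσ]
  have m1 := mp_sub _ Subtype.val_injective s1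
  have m2 := mp_sub _ Subtype.val_injective s2
  have hmp : Function.minimalPeriod σ a = S.card := by
    rw [← he]; exact m1 ⟨a, ha⟩
  have ho : orb σ a = S := by
    apply Finset.eq_of_subset_of_card_le
    · intro y hy
      obtain ⟨i, rfl⟩ := (mem_orb _ _ _).1 hy
      have := (s1.iterate_right i).eq ⟨a, ha⟩
      simp only at this
      rw [← this]
      exact Subtype.property _
    · rw [orb_card, hmp]
  simp only [goodAt, Finset.mem_coe, Finset.mem_filter, Finset.mem_univ, true_and]
  refine ⟨⟨hmp, ?_⟩, ho⟩
  intro x hx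
  rw [ho]
  by_contra hxS
  apply hf ⟨x, hxS⟩
  rw [← m2]; exact hx

lemma goodAt_card (b : ℕ) (α : Type) [Fintype α] (a : α) (d K : ℕ) (hd : 1 ≤ d)
    (hK : ∀ S : Finset α, S.card = d → K ≤ (good b {x // ¬ x ∈ S}).card) :
    (Fintype.card α - 1).choose (d-1) * ((d - 1).factorial * K) ≤ (goodAt b α a d).card := by
  set T := ((Finset.univ.erase a).powersetCard (d-1)).image (fun U => insert a U) with hT
  have hTc : T.card = (Fintype.card α - 1).choose (d-1) := by
    rw [hT, Finset.card_image_of_injOn, Finset.card_powersetCard, Finset.card_erase_of_mem (by simp),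
      Finset.card_univ]
    intro U hU V hV h
    simp only [Finset.mem_coe, Finset.mem_powersetCard] at hU hV
    have hu : a ∉ U := fun h => by simpa using hU.1 h
    have hv : a ∉ V := fun h => by simpa using hV.1 h
    rw [← Finset.erase_insert hu, ← Finset.erase_insert hv]
    simp only at h
    rw [h]
  have hTm : ∀ S ∈ T, a ∈ S ∧ S.card = d := by
    intro S hS
    rw [hT, Finset.mem_image] at hS
    obtain ⟨U, hU, rfl⟩ := hS
    rw [Finset.mem_powersetCard] at hU
    have hu : a ∉ U := fun h => by simpa using hU.1 h
    refine ⟨by simp, ?_⟩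
    rw [Finset.card_insert_of_notMem hu, hU.2]; omega
  have hsum : ∑ S ∈ T, ((goodAt b α a d).filter (fun σ => orb σ a = S)).card
      ≤ (goodAt b α a d).card := by
    rw [← Finset.card_biUnion]
    · apply Finset.card_le_card
      intro σ hσ
      simp only [Finset.mem_biUnion, Finset.mem_filter] at hσ
      obtain ⟨_, _, h, _⟩ := hσ; exact h
    · intro S _ S' _ hne
      rw [Function.onFun, Finset.disjoint_left]
      intro σ h h'
      simp only [Finset.mem_filter] at h h'
      exact hne (h.2.symm.trans h'.2)
  refine le_trans ?_ hsum
  rw [← hTc, ← smul_eq_mul]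
  apply Finset.card_nsmul_le_sum
  intro S hS
  obtain ⟨h1, h2⟩ := hTm S hS
  subst h2
  exact goodOrb b α a S h1 K (hK S rfl)

lemma goodAt_card_real (b : ℕ) (α : Type) [Fintype α] (a : α) (m d : ℕ) (p : ℝ)
    (hm : Fintype.card α = m) (hd : 1 ≤ d) (hdm : d ≤ m)
    (hK : ∀ S : Finset α, S.card = d →
      ((m - d).factorial : ℝ) * p ≤ (good b {x // ¬ x ∈ S}).card) :
    ((m - 1).factorial : ℝ) * p ≤ (goodAt b α a d).card := by
  have h := goodAt_card b α a d ⌈((m - d).factorial : ℝ) * p⌉₊ hd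
    (fun S hS => Nat.ceil_le.2 (hK S hS))
  rw [hm] at h
  have hf : (m - 1).choose (d-1) * (d - 1).factorial * (m - d).factorial = (m-1).factorial := by
    have := Nat.choose_mul_factorial_mul_factorial (n := m-1) (k := d-1) (by omega)
    rwa [show m - 1 - (d - 1) = m - d by omega] at this
  have h' : (((m - 1).choose (d-1) : ℕ) : ℝ) * (((d - 1).factorial : ℝ) *
      (⌈((m - d).factorial : ℝ) * p⌉₊ : ℝ)) ≤ (goodAt b α a d).card := by exact_mod_cast h
  refine le_trans ?_ h'
  rw [← hf]
  push_cast
  rw [mul_assoc, mul_assoc]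
  gcongr
  exact Nat.le_ceil _

/-- the product `∏_{i=1}^q (1 - 1/(ib))` -/
noncomputable def PP (b q : ℕ) : ℝ := ∏ i ∈ Finset.range q, (1 - 1 / (((i : ℝ) + 1) * b))

lemma PP_succ (b q : ℕ) (hb : 1 ≤ b) :
    (((q : ℝ) + 1) * b) * PP b (q+1) = (((q : ℝ) + 1) * b - 1) * PP b q := by
  unfold PP
  rw [Finset.prod_range_succ]
  have : (0 : ℝ) < b := by exact_mod_cast hb
  field_simp

lemma block (b m : ℕ) (hb : 1 ≤ b) :
    ((m : ℝ) + b) * PP b ((m + b) / b) =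
      m * PP b (m / b) + ((∑ k ∈ Finset.range b, PP b ((m + k) / b)) - PP b (m / b)) := by
  obtain ⟨q, r, hr, rfl⟩ : ∃ q r, r < b ∧ m = q * b + r :=
    ⟨m / b, m % b, Nat.mod_lt _ hb, by rw [mul_comm]; exact (Nat.div_add_mod m b).symm⟩
  have e0 : (q * b + r) / b = q := by
    rw [mul_comm, Nat.mul_add_div hb, Nat.div_eq_of_lt hr]; rfl
  have e1 : (q * b + r + b) / b = q + 1 := by
    rw [Nat.add_div_right _ hb, e0]
  have hs : ∑ k ∈ Finset.range b, PP b ((q * b + r + k) / b) =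
      ((b : ℝ) - r) * PP b q + r * PP b (q+1) := by
    conv_lhs => rw [show b = (b - r) + r by omega]
    rw [Finset.sum_range_add, show b - r + r = b by omega]
    congr 1
    · rw [Finset.sum_congr rfl (g := fun _ => PP b q)]
      · rw [Finset.sum_const, Finset.card_range, nsmul_eq_mul, Nat.cast_sub hr.le]
      · intro k hk
        rw [Finset.mem_range] at hk
        congr 1
        rw [add_assoc, mul_comm, Nat.mul_add_div hb, Nat.div_eq_of_lt (by omega)]; rfl
    · rw [Finset.sum_congr rfl (g := fun _ => PP b (q+1))]
      · rw [Finset.sum_const, Finset.card_range, nsmul_eq_mul]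
      · intro k hk
        rw [Finset.mem_range] at hk
        congr 1
        rw [show q * b + r + (b - r + k) = b * (q+1) + k by
          have : r + (b - r + k) = b + k := by omega
          rw [add_assoc, this]; ring, Nat.mul_add_div hb, Nat.div_eq_of_lt (by omega), add_zero]
  rw [e0, e1, hs]
  have := PP_succ b q hb
  push_cast
  linear_combination this

lemma sum_PP (b : ℕ) (hb : 1 ≤ b) (m : ℕ) :
    ∑ i ∈ Finset.range m, (if b ∣ m - i then 0 else PP b (i / b)) = m * PP b (m / b) := by
  induction m using Nat.strong_induction_on with
  | _ m ih =>
    rcases Nat.lt_or_ge m b with h | h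
    · rw [Finset.sum_congr rfl (g := fun _ => (1:ℝ))]
      · rw [Nat.div_eq_of_lt h]; simp [PP]
      · intro i hi
        rw [Finset.mem_range] at hi
        rw [if_neg, Nat.div_eq_of_lt (by omega)]
        · simp [PP]
        · intro hd
          have := Nat.le_of_dvd (by omega) hd
          omega
    · obtain ⟨m, rfl⟩ := Nat.exists_eq_add_of_le' h
      rw [Finset.sum_range_add]
      have h1 : ∑ i ∈ Finset.range m, (if b ∣ m + b - i then 0 else PP b (i / b)) =
          m * PP b (m / b) := by
        rw [← ih m (by omega)]
        apply Finset.sum_congr rfl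
        intro i hi
        rw [Finset.mem_range] at hi
        rw [show m + b - i = (m - i) + b by omega]
        simp only [Nat.dvd_add_self_right]
      rw [h1]
      push_cast
      rw [block b m hb]
      congr 1
      obtain ⟨c, rfl⟩ := Nat.exists_eq_add_of_le' hb
      rw [Finset.sum_range_succ', Finset.sum_range_succ']
      simp only [add_zero, Nat.add_sub_cancel_left, dvd_refl, if_true, add_sub_cancel_right]
      apply Finset.sum_congr rfl
      intro k hk
      rw [Finset.mem_range] at hk
      rw [if_neg]
      intro hd
      have := Nat.le_of_dvd (by omega) hd
      omega

lemma good_card (b : ℕ) (hb : 1 ≤ b) (m : ℕ) : ∀ (α : Type) [Fintype α], Fintype.card α = m →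
    (m.factorial : ℝ) * PP b (m / b) ≤ (good b α).card := by
  induction m using Nat.strong_induction_on with
  | _ m ih =>
    intro α _ hα
    rcases Nat.eq_zero_or_pos m with rfl | hm
    · have : IsEmpty α := Fintype.card_eq_zero_iff.1 hα
      simp [PP, good]
    · obtain ⟨a⟩ : Nonempty α := Fintype.card_pos_iff.1 (hα ▸ hm)
      have key : ∀ i ∈ Finset.range m, ((m - 1).factorial : ℝ) *
          (if b ∣ m - i then 0 else PP b (i / b)) ≤
          (((good b α).filter (fun σ : Equiv.Perm α => Function.minimalPeriod σ a = m - i)).card : ℝ) := by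
        intro i hi
        rw [Finset.mem_range] at hi
        split_ifs with hd
        · simp
        · refine (goodAt_card_real b α a m (m - i) (PP b (i/b)) hα (by omega) (by omega) ?_).trans ?_
          · intro S hS
            rw [show m - (m - i) = i by omega]
            apply ih i hi
            rw [Fintype.card_subtype_compl, hα]
            simp [hS]; omega
          · norm_cast
            apply Finset.card_le_card
            intro σ hσ
            simp only [goodAt, good, Finset.mem_filter, Finset.mem_univ, true_and] at hσ ⊢
            refine ⟨fun x hx => ?_, hσ.1⟩
            have := mp_of_mem_orb (hσ.2 x hx)
            rw [this, hσ.1] at hx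
            exact hd hx
      have hs := Finset.sum_le_sum key
      rw [← Finset.mul_sum, sum_PP b hb, ← mul_assoc] at hs
      have hfac : ((m - 1).factorial : ℝ) * m = m.factorial := by
        rw [mul_comm]; exact_mod_cast Nat.mul_factorial_pred hm.ne'
      rw [hfac] at hs
      refine hs.trans ?_
      norm_cast
      rw [← Finset.card_biUnion]
      · apply Finset.card_le_card
        intro σ hσ
        simp only [Finset.mem_biUnion, Finset.mem_filter] at hσ
        obtain ⟨_, _, h, _⟩ := hσ; exact h
      · intro S hS S' hS' hne
        rw [Function.onFun, Finset.disjoint_left]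
        intro σ h h'
        simp only [Finset.mem_filter, Finset.coe_range, Set.mem_Iio] at h h' hS hS'
        omega

lemma ub_ge (b n : ℕ) (hb : 1 ≤ b) (hbn : b ≤ n) (hj : (b : ℝ) ≤ 4 * Real.sqrt n / 3) :
    PP b ((n - b) / b) / b ≤ ub b n := by
  have hb0 : (0 : ℝ) < b := by exact_mod_cast hb
  have hprop : ∀ x : Fin n, ∀ σ ∈ goodAt b (Fin n) x b, ubProp b n σ ∧
      (Finset.univ.filter (fun y : Fin n =>
        b ∣ Function.minimalPeriod σ y ∧ ¬ (2 * b ∣ Function.minimalPeriod σ y))).card = b := by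
    intro x σ hσ
    simp only [goodAt, Finset.mem_filter, Finset.mem_univ, true_and] at hσ
    obtain ⟨h1, h2⟩ := hσ
    have hn2 : ¬ 2 * b ∣ b := fun h => by have := Nat.le_of_dvd hb h; omega
    have hset : (Finset.univ.filter (fun y : Fin n =>
        b ∣ Function.minimalPeriod σ y ∧ ¬ (2 * b ∣ Function.minimalPeriod σ y))) = orb σ x := by
      ext y
      simp only [Finset.mem_filter, Finset.mem_univ, true_and]
      constructor
      · exact fun h => h2 y h.1
      · intro h
        rw [mp_of_mem_orb h, h1]
        exact ⟨dvd_rfl, hn2⟩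
    have hc : (Finset.univ.filter (fun y : Fin n =>
        b ∣ Function.minimalPeriod σ y ∧ ¬ (2 * b ∣ Function.minimalPeriod σ y))).card = b := by
      rw [hset, orb_card, h1]
    refine ⟨⟨1, le_rfl, ?_, by rw [hc, one_mul], ?_⟩, hc⟩
    · rw [Nat.cast_one, le_div_iff₀ (by positivity)]
      linarith
    · intro y hy hd
      apply hy
      rw [mp_of_mem_orb (h2 y hd), h1]
      exact ⟨dvd_rfl, hn2⟩
  set U := Finset.univ.filter (fun σ : Equiv.Perm (Fin n) => ubProp b n σ) with hU
  have h1 : ∑ x : Fin n, (goodAt b (Fin n) x b).card ≤ U.card * b := by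
    have : ∀ x : Fin n, (goodAt b (Fin n) x b).card =
        ∑ σ ∈ U, if σ ∈ goodAt b (Fin n) x b then 1 else 0 := by
      intro x
      rw [← Finset.card_filter]
      congr 1
      ext σ
      simp only [hU, Finset.mem_filter, Finset.mem_univ, true_and]
      exact ⟨fun h => ⟨(hprop x σ h).1, h⟩, fun h => h.2⟩
    simp_rw [this]
    rw [Finset.sum_comm, ← smul_eq_mul]
    apply Finset.sum_le_card_nsmul
    intro σ _
    rw [← Finset.card_filter]
    by_cases hex : ∃ x, σ ∈ goodAt b (Fin n) x b
    · obtain ⟨x, hx⟩ := hex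
      refine le_trans (Finset.card_le_card ?_) (hprop x σ hx).2.le
      intro y hy
      simp only [goodAt, Finset.mem_filter, Finset.mem_univ, true_and] at hy ⊢
      rw [hy.1]
      exact ⟨dvd_rfl, fun h => by have := Nat.le_of_dvd hb h; omega⟩
    · push Not at hex
      simp [hex]
  have h2 : ∀ x : Fin n, ((n - 1).factorial : ℝ) * PP b ((n - b) / b) ≤
      (goodAt b (Fin n) x b).card := by
    intro x
    apply goodAt_card_real b (Fin n) x n b _ (by simp) hb hbn
    intro S hS
    have hc : Fintype.card {x : Fin n // ¬ x ∈ S} = n - b := by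
      rw [Fintype.card_subtype_compl]
      simp [hS]
    convert good_card b hb (n - b) {x : Fin n // ¬ x ∈ S} hc
  have h3 : (n : ℝ) * (((n - 1).factorial : ℝ) * PP b ((n - b) / b)) ≤ U.card * b := by
    refine le_trans ?_ (by exact_mod_cast h1 : ((∑ x : Fin n, (goodAt b (Fin n) x b).card : ℕ) : ℝ)
      ≤ U.card * b)
    push_cast
    have := Finset.card_nsmul_le_sum (Finset.univ : Finset (Fin n))
      (fun x => ((goodAt b (Fin n) x b).card : ℝ)) _ (fun x _ => h2 x)
    simpa using this
  have hfac : (n : ℝ) * ((n - 1).factorial : ℝ) = n.factorial := by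
    exact_mod_cast Nat.mul_factorial_pred (by omega)
  rw [← mul_assoc, hfac] at h3
  unfold ub
  rw [div_le_div_iff₀ hb0 (by positivity)]
  linarith

lemma PP_ge (b q : ℕ) (hb : 4 ≤ b) (hq : 1 ≤ q) :
    ((4 * q : ℝ)⁻¹) ^ (1 / (b : ℝ)) ≤ PP b q := by
  have hb4 : (4 : ℝ) ≤ b := by exact_mod_cast hb
  have hb0 : (0 : ℝ) < b := by linarith
  have h1b : 1 / (b : ℝ) ≤ 1 := by rw [div_le_one hb0]; linarith
  induction q, hq using Nat.le_induction with
  | base =>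
    have h := one_add_mul_self_le_rpow_one_add (s := -(1 / (b : ℝ))) (by linarith)
      (p := (b : ℝ) / 2) (by linarith)
    have e : 1 + (b : ℝ) / 2 * -(1 / (b : ℝ)) = 1 / 2 := by field_simp; norm_num
    rw [e] at h
    have hp : (0 : ℝ) ≤ 1 + -(1 / (b : ℝ)) := by linarith
    have h' := Real.rpow_le_rpow (by norm_num) h (z := 2 / (b : ℝ)) (by positivity)
    rw [← Real.rpow_mul hp, show (b : ℝ) / 2 * (2 / b) = 1 by field_simp, Real.rpow_one] at h'
    have e2 : ((1 : ℝ) / 2) ^ (2 / (b : ℝ)) = ((4 * ((1 : ℕ) : ℝ))⁻¹) ^ (1 / (b : ℝ)) := by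
      rw [show (2 : ℝ) / b = 2 * (1 / b) by ring, Real.rpow_mul (by norm_num)]
      norm_num
    rw [← e2]
    simp only [PP, Finset.range_one, Finset.prod_singleton, Nat.cast_zero, zero_add, one_mul]
    linarith
  | succ q hq ih =>
    have hq0 : (0 : ℝ) < q := by exact_mod_cast hq
    have hbern := rpow_one_add_le_one_add_mul_self (s := -(1 / ((q : ℝ) + 1)))
      (by rw [neg_le_neg_iff, div_le_one (by positivity)]; linarith)
      (p := 1 / (b : ℝ)) (by positivity) h1b
    have e : ((4 * ((q + 1 : ℕ) : ℝ))⁻¹) = ((4 * q : ℝ)⁻¹) * (1 + -(1 / ((q : ℝ) + 1))) := by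
      push_cast; field_simp; ring
    have hp : (0 : ℝ) ≤ 1 + -(1 / ((q : ℝ) + 1)) := by
      have : 1 / ((q : ℝ) + 1) ≤ 1 := by rw [div_le_one (by positivity)]; linarith
      linarith
    rw [e, Real.mul_rpow (by positivity) hp]
    have hP : PP b (q+1) = PP b q * (1 - 1 / (((q : ℝ) + 1) * b)) := by
      unfold PP; rw [Finset.prod_range_succ]
    rw [hP]
    have e3 : 1 + 1 / (b : ℝ) * -(1 / ((q : ℝ) + 1)) = 1 - 1 / (((q : ℝ) + 1) * b) := by
      field_simp; ring
    rw [e3] at hbern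
    exact mul_le_mul ih hbern (Real.rpow_nonneg hp _) ((Real.rpow_nonneg (by positivity) _).trans ih)

lemma ub_exp (b n : ℕ) (hb : 4 ≤ b) (hn : 404 ≤ n) (hj : (b : ℝ) ≤ 4 * Real.sqrt n / 3) :
    Real.exp (-(Real.log n / b)) / b ≤ ub b n := by
  have hn' : (404 : ℝ) ≤ n := by exact_mod_cast hn
  have hb0 : (0 : ℝ) < b := by exact_mod_cast (by omega : 0 < b)
  have hsq : Real.sqrt n * Real.sqrt n = n := Real.mul_self_sqrt (by positivity)
  have hs20 : 20 ≤ Real.sqrt n := Real.le_sqrt_of_sq_le (by linarith)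
  have hbn : b ≤ n := by
    have : (b : ℝ) ≤ n := by nlinarith
    exact_mod_cast this
  refine le_trans ?_ (ub_ge b n (by omega) hbn hj)
  gcongr
  have e : Real.exp (-(Real.log n / b)) = ((n : ℝ)⁻¹) ^ (1 / (b : ℝ)) := by
    rw [Real.rpow_def_of_pos (by positivity), Real.log_inv]
    congr 1; ring
  rw [e]
  rcases Nat.eq_zero_or_pos ((n - b) / b) with h0 | h0
  · rw [h0]
    simp only [PP, Finset.range_zero, Finset.prod_empty]
    apply Real.rpow_le_one (by positivity)
    · apply inv_le_one_of_one_le₀; linarith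
    · positivity
  · refine le_trans ?_ (PP_ge b _ hb h0)
    have hq : 4 * ((n - b) / b) ≤ n := by
      calc 4 * ((n - b) / b) ≤ b * ((n - b) / b) := Nat.mul_le_mul_right _ hb
        _ ≤ n - b := Nat.mul_div_le _ _
        _ ≤ n := Nat.sub_le _ _
    have hq' : (4 : ℝ) * (((n - b) / b : ℕ) : ℝ) ≤ n := by exact_mod_cast hq
    have h0' : (0 : ℝ) < (((n - b) / b : ℕ) : ℝ) := by exact_mod_cast h0
    gcongr

theorem ub_lower_bounds (n : ℕ) (hn : 404 ≤ n) (b : ℕ)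
    (hb : b = 2 ^ (⌈Real.logb 2 (Real.log n / 3)⌉).toNat) :
    1 / (16 * Real.log n) ≤ ub b n ∧ 1 / (21 * Real.log n) ≤ ub (2 * b) n := by
  have hn' : (404 : ℝ) ≤ n := by exact_mod_cast hn
  have he : Real.exp 1 < 2.7182818286 := Real.exp_one_lt_d9
  have he0 := Real.exp_pos 1
  have hL6 : 6 < Real.log n := by
    rw [Real.lt_log_iff_exp_lt (by linarith)]
    refine lt_of_lt_of_le ?_ hn'
    rw [show (6 : ℝ) = ((6 : ℕ) : ℝ) * 1 by norm_num, Real.exp_nat_mul]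
    calc Real.exp 1 ^ 6 < 2.7182818286 ^ 6 := by gcongr
      _ < 404 := by norm_num
  set L := Real.log n with hL
  have hLs : L ≤ Real.sqrt n := by
    have hs : 0 < Real.sqrt n := Real.sqrt_pos.2 (by linarith)
    have h1 : L = 2 * Real.log (Real.sqrt n) := by
      rw [Real.log_sqrt (by linarith)]; ring
    have h2 := Real.log_le_sub_one_of_pos (x := Real.sqrt n / 2) (by linarith)
    rw [Real.log_div hs.ne' (by norm_num)] at h2
    have := Real.log_two_lt_d9
    linarith
  set z := ⌈Real.logb 2 (L / 3)⌉ with hz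
  have hx : (0 : ℝ) < L / 3 := by linarith
  have hpow : (2 : ℝ) ^ Real.logb 2 (L / 3) = L / 3 :=
    Real.rpow_logb (by norm_num) (by norm_num) hx
  have hlog1 : 1 < Real.logb 2 (L / 3) := by
    rw [Real.lt_logb_iff_rpow_lt (by norm_num) hx]; norm_num; linarith
  have hz2 : 2 ≤ z := by
    have : (1 : ℤ) < z := Int.lt_ceil.2 (by exact_mod_cast hlog1)
    omega
  have hbr : (b : ℝ) = (2 : ℝ) ^ (z : ℝ) := by
    rw [hb]
    push_cast
    rw [← Real.rpow_natCast]
    congr 1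
    have : ((z.toNat : ℤ)) = z := Int.toNat_of_nonneg (by omega)
    exact_mod_cast this
  have hlow : L / 3 ≤ b := by
    rw [hbr, ← hpow]
    exact Real.rpow_le_rpow_of_exponent_le (by norm_num) (Int.le_ceil _)
  have hup : (b : ℝ) ≤ 2 * L / 3 := by
    have h1 : (z : ℝ) ≤ Real.logb 2 (L / 3) + 1 := (Int.ceil_lt_add_one _).le
    have h2 := Real.rpow_le_rpow_of_exponent_le (x := 2) (by norm_num) h1
    rw [Real.rpow_add (by norm_num), hpow, ← hbr, Real.rpow_one] at h2
    linarith
  have hb4 : 4 ≤ b := by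
    rw [hb]
    calc 4 = 2 ^ 2 := rfl
      _ ≤ _ := Nat.pow_le_pow_right (by norm_num) (by omega)
  have hb0 : (0 : ℝ) < b := by linarith
  have he3 : Real.exp 3 ≤ 24 := by
    rw [show (3 : ℝ) = ((3 : ℕ) : ℝ) * 1 by norm_num, Real.exp_nat_mul]
    calc Real.exp 1 ^ 3 ≤ 2.7182818286 ^ 3 := by gcongr
      _ ≤ 24 := by norm_num
  have he2 : Real.exp (3/2) ≤ 15 := by
    refine (Real.exp_le_exp.2 (by norm_num : (3/2 : ℝ) ≤ ((2 : ℕ) : ℝ) * 1)).trans ?_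
    rw [Real.exp_nat_mul]
    calc Real.exp 1 ^ 2 ≤ 2.7182818286 ^ 2 := by gcongr
      _ ≤ 15 := by norm_num
  constructor
  · refine le_trans ?_ (ub_exp b n hb4 hn (by linarith))
    rw [← hL, Real.exp_neg, ← one_div, div_div]
    apply one_div_le_one_div_of_le (by positivity)
    have h1 : Real.exp (L / b) ≤ 24 := by
      refine le_trans (Real.exp_le_exp.2 ?_) he3
      rw [div_le_iff₀ hb0]; linarith
    calc Real.exp (L / b) * b ≤ 24 * (2 * L / 3) := by gcongr
      _ = 16 * L := by ring
  · refine le_trans ?_ (ub_exp (2 * b) n (by omega) hn (by push_cast; linarith))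
    push_cast
    rw [← hL, Real.exp_neg, ← one_div, div_div]
    apply one_div_le_one_div_of_le (by positivity)
    have h1 : Real.exp (L / (2 * b)) ≤ 15 := by
      refine le_trans (Real.exp_le_exp.2 ?_) he2
      rw [div_le_iff₀ (by positivity)]; linarith
    calc Real.exp (L / (2 * b)) * (2 * b) ≤ 15 * (2 * (2 * L / 3)) := by gcongr
      _ ≤ 21 * L := by linarith
end

section
/- For all natural numbers b ≥ 2 and n ≥ 1, the proportion ũ_b(n) satisfies ũ_b(n) ≥ (1 − 1/(b−1)) · u_b(n). -/
open scoped Classical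

/-- `utb b n` is the proportion of elements of `Alt_n` satisfying `ubProp b n`. -/
noncomputable def utb (b n : ℕ) : ℝ :=
  ((Finset.univ.filter (fun σ : Equiv.Perm (Fin n) =>
      σ ∈ alternatingGroup (Fin n) ∧ ubProp b n σ)).card : ℝ) /
    (Fintype.card (alternatingGroup (Fin n)) : ℝ)


set_option linter.unusedSectionVars false

namespace UB

/-- Real-valued indicator of a proposition. -/
noncomputable def ind (p : Prop) : ℝ := if p then 1 else 0

theorem ind_congr {p q : Prop} (h : p ↔ q) : ind p = ind q := by
  unfold ind; simp [h]

theorem ind_and (p q : Prop) : ind (p ∧ q) = ind p * ind q := by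
  unfold ind; by_cases hp : p <;> by_cases hq : q <;> simp [hp, hq]

theorem ind_nonneg (p : Prop) : 0 ≤ ind p := by
  unfold ind; split_ifs <;> norm_num

section comb
variable {α : Type} [Fintype α] [DecidableEq α]
open Function

theorem per_pos (e : Equiv.Perm α) (x : α) : 0 < minimalPeriod e x :=
  minimalPeriod_pos_of_mem_periodicPts (e.injective.mem_periodicPts x)

theorem reach_symm (e : Equiv.Perm α) {x y : α} {k : ℕ} (h : e^[k] y = x) :
    ∃ j, e^[j] x = y := by
  have hp := per_pos e y
  refine ⟨minimalPeriod e y * k - k, ?_⟩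
  rw [← h, ← iterate_add_apply, Nat.sub_add_cancel (Nat.le_mul_of_pos_left k hp)]
  exact ((isPeriodicPt_minimalPeriod e y).mul_const k)

theorem per_reach (e : Equiv.Perm α) {x y : α} {k : ℕ} (h : e^[k] y = x) :
    minimalPeriod e x = minimalPeriod e y := by
  rw [← h]
  exact minimalPeriod_apply_iterate (e.injective.mem_periodicPts y) k

/-- The permutation of `Option α` with `none` inserted before `x`. -/
def ins (e : Equiv.Perm α) (i : Option α) : Equiv.Perm (Option α) :=
  Equiv.swap none i * e.optionCongr

theorem ins_none (e : Equiv.Perm α) (i : Option α) : ins e i none = i := by simp [ins]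

theorem ins_some_of_eq (e : Equiv.Perm α) {x y : α} (h : e y = x) :
    ins e (some x) (some y) = none := by simp [ins, h]

theorem ins_some_of_ne (e : Equiv.Perm α) {x y : α} (h : e y ≠ x) :
    ins e (some x) (some y) = some (e y) := by
  simp only [ins, Equiv.Perm.mul_apply, Equiv.optionCongr_apply, Option.map_some]
  exact Equiv.swap_apply_of_ne_of_ne (by simp) (by simpa using h)

theorem ins_iter (e : Equiv.Perm α) (x : α) (k : ℕ) (hk : k < minimalPeriod e x) :
    (ins e (some x))^[k + 1] none = some (e^[k] x) := by
  induction k with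
  | zero => simp [ins_none]
  | succ k ih =>
    rw [iterate_succ_apply', ih (by omega), iterate_succ_apply']
    apply ins_some_of_ne
    intro h
    rw [← iterate_succ_apply' e] at h
    exact not_isPeriodicPt_of_pos_of_lt_minimalPeriod (by omega) hk h

theorem ins_per (e : Equiv.Perm α) (x : α) :
    minimalPeriod (ins e (some x)) none = minimalPeriod e x + 1 := by
  have hp := per_pos e x
  obtain ⟨q, hq⟩ : ∃ q, minimalPeriod e x = q + 1 := ⟨minimalPeriod e x - 1, by omega⟩
  have h1 : IsPeriodicPt (ins e (some x)) (minimalPeriod e x + 1) none := by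
    unfold IsPeriodicPt IsFixedPt
    rw [hq, iterate_succ_apply', ins_iter e x q (by omega)]
    apply ins_some_of_eq
    rw [← iterate_succ_apply' e]
    have h3 := isPeriodicPt_minimalPeriod e x
    rw [hq] at h3
    exact h3
  apply le_antisymm (h1.minimalPeriod_le (by omega))
  by_contra hlt
  have h0 := per_pos (ins e (some x)) none
  obtain ⟨r, hr⟩ : ∃ r, minimalPeriod (ins e (some x)) none = r + 1 :=
    ⟨minimalPeriod (ins e (some x)) none - 1, by omega⟩
  have h2 := isPeriodicPt_minimalPeriod (ins e (some x)) none
  unfold IsPeriodicPt IsFixedPt at h2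
  rw [hr, ins_iter e x r (by omega)] at h2
  simp at h2

theorem ins_reach (e : Equiv.Perm α) (x y : α) :
    (∃ k, (ins e (some x))^[k] none = some y) ↔ ∃ k, e^[k] x = y := by
  have hp := per_pos e x
  constructor
  · rintro ⟨k, hk⟩
    rw [← iterate_mod_minimalPeriod_eq, ins_per] at hk
    have hlt := Nat.mod_lt k (Nat.succ_pos (minimalPeriod e x))
    rcases h : k % (minimalPeriod e x + 1) with _ | r
    · rw [h] at hk; simp at hk
    · rw [h] at hk
      rw [Nat.succ_eq_add_one, h] at hlt
      rw [ins_iter e x r (by omega)] at hk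
      exact ⟨r, by simpa using hk⟩
  · rintro ⟨k, hk⟩
    rw [← iterate_mod_minimalPeriod_eq] at hk
    exact ⟨_, (ins_iter e x _ (Nat.mod_lt k hp)).trans (by rw [hk])⟩

theorem per_eq_of_iter {β : Type} {f : α → α} {g : β → β} {x : α} {y : β} {i : α → β}
    (hi : Injective i) (hy : y = i x) (h : ∀ k, g^[k] y = i (f^[k] x)) :
    minimalPeriod g y = minimalPeriod f x := by
  rw [minimalPeriod_eq_minimalPeriod_iff]
  intro n
  unfold IsPeriodicPt IsFixedPt
  rw [h, hy, hi.eq_iff]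

theorem ins_per_off (e : Equiv.Perm α) (x y : α) (hy : ¬ ∃ k, e^[k] x = y) :
    minimalPeriod (ins e (some x)) (some y) = minimalPeriod e y := by
  apply per_eq_of_iter (Option.some_injective α) rfl
  intro k
  induction k with
  | zero => simp
  | succ k ih =>
    rw [iterate_succ_apply', ih, iterate_succ_apply']
    apply ins_some_of_ne
    intro h
    rw [← iterate_succ_apply' e] at h
    exact hy (reach_symm e h)

theorem ins_none_iter (e : Equiv.Perm α) (k : ℕ) : (ins e none)^[k] none = none := by
  induction k with
  | zero => simp
  | succ k ih => rw [iterate_succ_apply', ih, ins_none]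

theorem ins_none_per (e : Equiv.Perm α) : minimalPeriod (ins e none) none = 1 := by
  rw [minimalPeriod_eq_one_iff_isFixedPt]
  exact ins_none e none

theorem ins_none_per_some (e : Equiv.Perm α) (y : α) :
    minimalPeriod (ins e none) (some y) = minimalPeriod e y := by
  apply per_eq_of_iter (Option.some_injective α) rfl
  intro k
  induction k with
  | zero => simp
  | succ k ih =>
    rw [iterate_succ_apply', ih, iterate_succ_apply']
    simp [ins]

/-- No cycle length is divisible by `b`. -/
def good (b : ℕ) (e : Equiv.Perm α) : Prop := ∀ x, ¬ b ∣ minimalPeriod e x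

/-- No cycle length is divisible by `b`, where the cycle of `a` counts as longer by `t`. -/
def pgood (b t : ℕ) (a : α) (e : Equiv.Perm α) : Prop :=
  (∀ y, (¬ ∃ k, e^[k] a = y) → ¬ b ∣ minimalPeriod e y) ∧ ¬ b ∣ minimalPeriod e a + t

theorem pgood_zero (b : ℕ) (a : α) (e : Equiv.Perm α) : pgood b 0 a e ↔ good b e := by
  constructor
  · rintro ⟨h1, h2⟩ y
    by_cases h : ∃ k, e^[k] a = y
    · obtain ⟨k, hk⟩ := h
      rw [per_reach e hk]; exact h2
    · exact h1 y h
  · intro h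
    exact ⟨fun y _ => h y, h a⟩

theorem pgood_ins_some (b t : ℕ) (x : α) (e : Equiv.Perm α) :
    pgood b t none (ins e (some x)) ↔ pgood b (t + 1) x e := by
  unfold pgood
  rw [ins_per, show minimalPeriod e x + 1 + t = minimalPeriod e x + (t + 1) by ring]
  apply and_congr_left
  intro _
  constructor
  · intro h y hy
    rw [← ins_per_off e x y hy]
    exact h (some y) (by rwa [ins_reach])
  · rintro h (_ | y) hy
    · exact absurd ⟨0, rfl⟩ hy
    · rw [ins_reach] at hy
      rw [ins_per_off e x y hy]
      exact h y hy

theorem pgood_ins_none (b t : ℕ) (e : Equiv.Perm α) :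
    pgood b t none (ins e none) ↔ (¬ b ∣ 1 + t) ∧ good b e := by
  unfold pgood
  rw [ins_none_per, and_comm]
  apply and_congr_right
  intro _
  constructor
  · intro h y
    rw [← ins_none_per_some e y]
    refine h (some y) ?_
    rintro ⟨k, hk⟩
    rw [ins_none_iter] at hk
    simp at hk
  · rintro h (_ | y) hy
    · exact absurd ⟨0, rfl⟩ hy
    · rw [ins_none_per_some]
      exact h y

/-- weight of a permutation: `1` if `θ = 1`, and `(-1)^(number of cycles)` if `θ = -1` -/
noncomputable def wt (θ : ℝ) (e : Equiv.Perm α) : ℝ :=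
  θ ^ Fintype.card α * (if Equiv.Perm.sign e = 1 then 1 else θ)

theorem wt_ins_none (θ : ℝ) (e : Equiv.Perm α) : wt θ (ins e none) = θ * wt θ e := by
  unfold wt
  have : Equiv.Perm.sign (ins e none) = Equiv.Perm.sign e := by simp [ins]
  rw [this, Fintype.card_option]; ring

theorem wt_ins_some (θ : ℝ) (hθ : θ * θ = 1) (e : Equiv.Perm α) (x : α) :
    wt θ (ins e (some x)) = wt θ e := by
  unfold wt
  have : Equiv.Perm.sign (ins e (some x)) = - Equiv.Perm.sign e := by
    simp [ins]
  rw [this, Fintype.card_option]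
  rcases Int.units_eq_one_or (Equiv.Perm.sign e) with h | h
  · have h1 : ¬ ((-1 : ℤˣ) = 1) := by decide
    rw [h, if_neg h1, if_pos rfl, pow_succ]
    linear_combination θ ^ Fintype.card α * hθ
  · have h1 : ¬ ((-1 : ℤˣ) = 1) := by decide
    rw [h, if_neg h1, neg_neg, if_pos rfl, pow_succ]
    ring

/-- Weighted count of `good` permutations. -/
noncomputable def W (θ : ℝ) (b : ℕ) (α : Type) [Fintype α] [DecidableEq α] : ℝ :=
  ∑ e : Equiv.Perm α, wt θ e * ind (good b e)

/-- Weighted count of `pgood` permutations. -/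
noncomputable def G (θ : ℝ) (b t : ℕ) (a : α) : ℝ :=
  ∑ e : Equiv.Perm α, wt θ e * ind (pgood b t a e)

theorem G_zero (θ : ℝ) (b : ℕ) (a : α) : G θ b 0 a = W θ b α := by
  unfold G W
  refine Finset.sum_congr rfl fun e _ => ?_
  rw [ind_congr (pgood_zero b a e)]

theorem G_option (θ : ℝ) (hθ : θ * θ = 1) (b t : ℕ) :
    G θ b t (none : Option α) = θ * ind (¬ b ∣ 1 + t) * W θ b α + ∑ x : α, G θ b (t + 1) x := by
  unfold G W
  rw [← Equiv.sum_comp Equiv.Perm.decomposeOption.symm, Fintype.sum_prod_type,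
    Fintype.sum_option]
  congr 1
  · rw [Finset.mul_sum]
    refine Finset.sum_congr rfl fun e _ => ?_
    change wt θ (ins e none) * ind (pgood b t none (ins e none)) = _
    rw [wt_ins_none, ind_congr (pgood_ins_none b t e), ind_and]
    ring
  · refine Finset.sum_congr rfl fun x _ => Finset.sum_congr rfl fun e _ => ?_
    change wt θ (ins e (some x)) * ind (pgood b t none (ins e (some x))) = _
    rw [wt_ins_some θ hθ, ind_congr (pgood_ins_some b t x e)]

theorem permCongr_iter {β : Type} (f : α ≃ β) (e : Equiv.Perm α) (x : α) (k : ℕ) :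
    (f.permCongr e)^[k] (f x) = f (e^[k] x) := by
  induction k with
  | zero => simp
  | succ k ih => rw [iterate_succ_apply', ih, iterate_succ_apply']; simp

theorem permCongr_per {β : Type} (f : α ≃ β) (e : Equiv.Perm α) (x : α) :
    minimalPeriod (f.permCongr e) (f x) = minimalPeriod e x :=
  per_eq_of_iter f.injective rfl (permCongr_iter f e x)

theorem wt_permCongr {β : Type} [Fintype β] [DecidableEq β] (θ : ℝ) (f : α ≃ β)
    (e : Equiv.Perm α) : wt θ (f.permCongr e) = wt θ e := by
  unfold wt
  rw [Equiv.Perm.sign_permCongr, Fintype.card_congr f]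

theorem G_congr {β : Type} [Fintype β] [DecidableEq β] (θ : ℝ) (b t : ℕ) (f : α ≃ β) (a : α) :
    G θ b t (f a) = G θ b t a := by
  unfold G
  rw [← Equiv.sum_comp f.permCongr]
  refine Finset.sum_congr rfl fun e _ => ?_
  rw [wt_permCongr]
  congr 1
  apply ind_congr
  unfold pgood
  rw [permCongr_per, ← f.forall_congr_right]
  simp only [permCongr_per, permCongr_iter, f.injective.eq_iff]

theorem W_congr {β : Type} [Fintype β] [DecidableEq β] (θ : ℝ) (b : ℕ) (f : α ≃ β) :
    W θ b β = W θ b α := by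
  unfold W
  rw [← Equiv.sum_comp f.permCongr]
  refine Finset.sum_congr rfl fun e _ => ?_
  rw [wt_permCongr]
  congr 1
  apply ind_congr
  unfold good
  rw [← f.forall_congr_right]
  simp only [permCongr_per]

end comb

/-- normalized count -/
noncomputable def u (θ : ℝ) (b m : ℕ) : ℝ := W θ b (Fin m) / (m.factorial : ℝ)

/-- pointed count -/
noncomputable def g (θ : ℝ) (b t m : ℕ) : ℝ := G θ b t (none : Option (Fin m))

theorem g_zero (θ : ℝ) (b m : ℕ) : g θ b 0 m = W θ b (Fin (m + 1)) := by
  unfold g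
  rw [G_zero]
  exact W_congr θ b (finSuccEquiv m)

theorem G_fin (θ : ℝ) (b t m : ℕ) (x : Fin (m + 1)) : G θ b t x = g θ b t m := by
  unfold g
  rw [← G_congr θ b t (finSuccEquiv' x) x]
  simp

theorem g_rec (θ : ℝ) (hθ : θ * θ = 1) (b t m : ℕ) :
    g θ b t m / (m.factorial : ℝ) =
      θ * ∑ i ∈ Finset.range (m + 1), ind (¬ b ∣ 1 + t + i) * u θ b (m - i) := by
  induction m generalizing t with
  | zero =>
    unfold g
    rw [G_option θ hθ]
    simp [u]
    ring
  | succ m ih =>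
    have h1 : g θ b t (m + 1) = θ * ind (¬ b ∣ 1 + t) * W θ b (Fin (m + 1)) +
        ((m : ℝ) + 1) * g θ b (t + 1) m := by
      conv_lhs => unfold g
      rw [G_option θ hθ]
      simp only [G_fin]
      simp
    rw [h1, Finset.sum_range_succ', mul_add, add_comm, add_div]
    congr 1
    · rw [Nat.factorial_succ]
      push_cast
      rw [mul_div_mul_left _ _ (by positivity), ih]
      congr 1
      refine Finset.sum_congr rfl fun i _ => ?_
      rw [show 1 + (t + 1) + i = 1 + t + (i + 1) by ring]
    · simp only [add_zero, Nat.sub_zero, u]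
      ring

theorem u_rec (θ : ℝ) (hθ : θ * θ = 1) (b m : ℕ) :
    (m : ℝ) * u θ b m = θ * ∑ j ∈ Finset.range m, ind (¬ b ∣ m - j) * u θ b j := by
  rcases m with _ | m
  · simp
  · have h := g_rec θ hθ b 0 m
    rw [g_zero] at h
    have h2 : ((m + 1 : ℕ) : ℝ) * u θ b (m + 1) = W θ b (Fin (m + 1)) / (m.factorial : ℝ) := by
      unfold u
      rw [Nat.factorial_succ]
      push_cast
      have : (m.factorial : ℝ) ≠ 0 := by positivity
      field_simp
    rw [h2, h]
    congr 1
    rw [← Finset.sum_range_reflect]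
    refine Finset.sum_congr rfl fun i hi => ?_
    rw [Finset.mem_range] at hi
    rw [show m + 1 - 1 - i = m - i by omega, show 1 + 0 + (m - i) = m + 1 - i by omega,
      show m - (m - i) = i by omega]

theorem u_zero (θ : ℝ) (b : ℕ) : u θ b 0 = 1 := by
  simp [u, W, wt, good, ind]

end UB

namespace UB

theorem P_step (b : ℕ) (hb : 1 ≤ b) (v : ℕ → ℝ) (m : ℕ) :
    ∑ j ∈ Finset.range (m + b), ind (b ∣ m + b - j) * v j =
      ∑ j ∈ Finset.range m, ind (b ∣ m - j) * v j + v m := by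
  rw [Finset.sum_range_add]
  congr 1
  · refine Finset.sum_congr rfl fun j hj => ?_
    rw [Finset.mem_range] at hj
    rw [show m + b - j = (m - j) + b by omega, ind_congr (Nat.dvd_add_self_right)]
  · rw [Finset.sum_eq_single_of_mem 0 (by simp; omega)]
    · simp [ind]
    · intro i hi h0
      rw [Finset.mem_range] at hi
      have : ¬ b ∣ m + b - (m + i) := by
        intro h
        have := Nat.le_of_dvd (by omega) h
        omega
      simp [ind, this]

theorem P_small (b : ℕ) (v : ℕ → ℝ) (m : ℕ) (hm : m < b) :
    ∑ j ∈ Finset.range m, ind (b ∣ m - j) * v j = 0 := by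
  apply Finset.sum_eq_zero
  intro i hi
  rw [Finset.mem_range] at hi
  have : ¬ b ∣ m - i := by
    intro h
    have := Nat.le_of_dvd (by omega) h
    omega
  simp [ind, this]

theorem closed (θ μ : ℝ) (b : ℕ) (hb : 1 ≤ b) (v δ c : ℕ → ℝ) (hv0 : v 0 = 1) (hδ0 : δ 0 = 1)
    (hrec : ∀ m : ℕ, (m : ℝ) * v m = θ * ∑ j ∈ Finset.range m, ind (¬ b ∣ m - j) * v j)
    (hδ1 : ∀ r < b, θ * ∑ j ∈ Finset.range r, δ j = r * δ r)
    (hδ2 : ∀ r < b, θ * (∑ j ∈ Finset.range b, δ j - δ r) = μ * δ r)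
    (hc0 : c 0 = 1)
    (hc : ∀ k : ℕ, (b : ℝ) * (k + 1) * c (k + 1) = (b * k + μ) * c k) :
    ∀ k : ℕ, ∀ r < b, v (b * k + r) = δ r * c k := by
  have hS : ∀ k : ℕ, μ * ∑ q ∈ Finset.range k, c q = b * k * c k := by
    intro k
    induction k with
    | zero => simp
    | succ k ih =>
      rw [Finset.sum_range_succ, mul_add, ih]
      push_cast
      linear_combination - hc k
  have hind : ∀ p : Prop, ind (¬ p) = 1 - ind p := by
    intro p; by_cases hp : p <;> simp [ind, hp]
  have hrec' : ∀ m : ℕ, (m : ℝ) * v m = θ * (∑ j ∈ Finset.range m, v j -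
      ∑ j ∈ Finset.range m, ind (b ∣ m - j) * v j) := by
    intro m
    rw [hrec m, ← Finset.sum_sub_distrib]
    congr 1
    refine Finset.sum_congr rfl fun j _ => ?_
    rw [hind]; ring
  have main : ∀ k : ℕ,
      (∀ r < b, ∑ j ∈ Finset.range (b * k + r), ind (b ∣ b * k + r - j) * v j =
        δ r * ∑ q ∈ Finset.range k, c q) →
      (∑ j ∈ Finset.range (b * k), v j =
        (∑ j ∈ Finset.range b, δ j) * ∑ q ∈ Finset.range k, c q) →
      ∀ r < b, v (b * k + r) = δ r * c k := by
    intro k hP hT r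
    induction r using Nat.strong_induction_on with
    | _ r ih =>
      intro hr
      by_cases h0 : b * k + r = 0
      · have hr0 : r = 0 := by omega
        have hk0 : k = 0 := by
          rcases Nat.mul_eq_zero.mp (by omega : b * k = 0) with h | h
          · omega
          · exact h
        subst hr0; subst hk0
        simp [hv0, hδ0, hc0]
      · have h1 := hrec' (b * k + r)
        rw [hP r hr, Finset.sum_range_add, hT] at h1
        have h2 : ∑ x ∈ Finset.range r, v (b * k + x) = (∑ x ∈ Finset.range r, δ x) * c k := by
          rw [Finset.sum_mul]
          refine Finset.sum_congr rfl fun x hx => ?_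
          rw [Finset.mem_range] at hx
          exact ih x hx (by omega)
        rw [h2] at h1
        have h3 : ((b * k + r : ℕ) : ℝ) ≠ 0 := by exact_mod_cast h0
        apply mul_left_cancel₀ h3
        rw [h1]
        push_cast
        linear_combination (∑ q ∈ Finset.range k, c q) * hδ2 r hr + c k * hδ1 r hr + δ r * hS k
  have key : ∀ k : ℕ,
      (∀ r < b, ∑ j ∈ Finset.range (b * k + r), ind (b ∣ b * k + r - j) * v j =
        δ r * ∑ q ∈ Finset.range k, c q) ∧
      (∑ j ∈ Finset.range (b * k), v j =
        (∑ j ∈ Finset.range b, δ j) * ∑ q ∈ Finset.range k, c q) := by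
    intro k
    induction k with
    | zero =>
      refine ⟨fun r hr => ?_, by simp⟩
      rw [mul_zero, zero_add, P_small b v r hr]
      simp
    | succ k ih =>
      have hm := main k ih.1 ih.2
      constructor
      · intro r hr
        rw [show b * (k + 1) + r = (b * k + r) + b by ring, P_step b hb, ih.1 r hr, hm r hr,
          Finset.sum_range_succ]
        ring
      · rw [mul_add, mul_one, Finset.sum_range_add, ih.2, Finset.sum_range_succ, mul_add,
          Finset.sum_mul _ _ (c k)]
        congr 1
        refine Finset.sum_congr rfl fun x hx => ?_
        rw [Finset.mem_range] at hx
        exact hm x hx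
  intro k
  exact main k (key k).1 (key k).2

/-- explicit coefficients -/
noncomputable def cf (b : ℕ) (μ : ℝ) : ℕ → ℝ
  | 0 => 1
  | k + 1 => cf b μ k * (b * k + μ) / (b * (k + 1))

theorem cf_rec (b : ℕ) (hb : 1 ≤ b) (μ : ℝ) (k : ℕ) :
    (b : ℝ) * (k + 1) * cf b μ (k + 1) = (b * k + μ) * cf b μ k := by
  have h1 : (b : ℝ) ≠ 0 := by positivity
  have h2 : (k : ℝ) + 1 ≠ 0 := by positivity
  rw [cf]
  field_simp

theorem cf_nonneg (b : ℕ) (μ : ℝ) (hμ : 0 ≤ μ) (k : ℕ) : 0 ≤ cf b μ k := by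
  induction k with
  | zero => simp [cf]
  | succ k ih => rw [cf]; positivity

theorem cf_le (b : ℕ) (hb : 2 ≤ b) (k : ℕ) :
    ((b : ℝ) - 1) * cf b 1 (k + 1) ≤ cf b (b - 1) (k + 1) := by
  have hb' : (2 : ℝ) ≤ b := by exact_mod_cast hb
  induction k with
  | zero => simp [cf]; apply le_of_eq; ring
  | succ k ih =>
    rw [cf, cf.eq_2 b (b - 1) (k + 1), mul_div_assoc, mul_div_assoc, ← mul_assoc]
    have := cf_nonneg b (b - 1) (by linarith) (k + 1)
    refine mul_le_mul ih ?_ (by positivity) this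
    apply div_le_div_of_nonneg_right _ (by positivity)
    linarith

/-- coefficients of `1 - z` -/
noncomputable def dl (r : ℕ) : ℝ := if r = 0 then 1 else if r = 1 then -1 else 0

theorem dl_sum (r : ℕ) : ∑ j ∈ Finset.range (r + 2), dl j = 0 := by
  induction r with
  | zero => simp [Finset.sum_range_succ, dl]
  | succ r ih => rw [Finset.sum_range_succ, ih]; simp [dl]

theorem u_bound (b : ℕ) (hb : 2 ≤ b) (m : ℕ) (hm : 2 ≤ m) :
    ((b : ℝ) - 1) * |u (-1) b m| ≤ u 1 b m := by
  have hb' : (2 : ℝ) ≤ b := by exact_mod_cast hb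
  have h1 := closed 1 (b - 1) b (by omega) (u 1 b) (fun _ => 1) (cf b (b - 1)) (u_zero _ _) rfl
    (u_rec 1 (by norm_num) b) (by intro r _; simp) (by intro r _; simp) rfl
    (fun k => cf_rec b (by omega) _ k)
  have h2 := closed (-1) 1 b (by omega) (u (-1) b) dl (cf b 1) (u_zero _ _) (by simp [dl])
    (u_rec (-1) (by norm_num) b)
    (by
      intro r _
      rcases r with _ | _ | r
      · simp
      · simp [dl]
      · rw [dl_sum]; simp [dl])
    (by
      intro r _
      obtain ⟨q, rfl⟩ : ∃ q, b = q + 2 := ⟨b - 2, by omega⟩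
      rw [dl_sum]; ring) rfl
    (fun k => cf_rec b (by omega) _ k)
  have hr : m % b < b := Nat.mod_lt _ (by omega)
  have e1 := h1 (m / b) (m % b) hr
  have e2 := h2 (m / b) (m % b) hr
  rw [Nat.div_add_mod] at e1 e2
  rw [e1, e2, one_mul, abs_mul, abs_of_nonneg (cf_nonneg b 1 (by norm_num) _)]
  rcases hk : m / b with _ | k
  · have : m < b := by
      rcases Nat.div_eq_zero_iff.mp hk with h | h
      · omega
      · exact h
    rw [Nat.mod_eq_of_lt this]
    have : dl m = 0 := by
      unfold dl; rw [if_neg (by omega), if_neg (by omega)]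
    rw [this]
    simp [cf]
  · have h3 : |dl (m % b)| ≤ 1 := by
      unfold dl; split_ifs <;> simp
    have h4 := cf_nonneg b 1 (by norm_num) (k + 1)
    calc ((b : ℝ) - 1) * (|dl (m % b)| * cf b 1 (k + 1))
        ≤ ((b : ℝ) - 1) * (1 * cf b 1 (k + 1)) := by
          apply mul_le_mul_of_nonneg_left _ (by linarith)
          exact mul_le_mul_of_nonneg_right h3 h4
      _ ≤ _ := by rw [one_mul]; exact cf_le b hb k

end UB

namespace UB
open Function

section
variable {α : Type} [Fintype α] [DecidableEq α]

/-- real sign -/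
noncomputable def sg (e : Equiv.Perm α) : ℝ := ((Equiv.Perm.sign e : ℤ) : ℝ)

theorem wt_one (e : Equiv.Perm α) : wt 1 e = 1 := by simp [wt]

theorem wt_neg_one (e : Equiv.Perm α) : wt (-1) e = (-1) ^ Fintype.card α * sg e := by
  unfold wt sg
  congr 1
  rcases Int.units_eq_one_or (Equiv.Perm.sign e) with h | h
  · simp [h]
  · have h1 : ¬ ((-1 : ℤˣ) = 1) := by decide
    rw [h, if_neg h1]; simp

theorem sg_abs (e : Equiv.Perm α) : |sg e| = 1 := by
  unfold sg
  rcases Int.units_eq_one_or (Equiv.Perm.sign e) with h | h <;> simp [h]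

theorem good_bound (b : ℕ) (hb : 2 ≤ b) (hα : 2 ≤ Fintype.card α) :
    ((b : ℝ) - 1) * |∑ e : Equiv.Perm α, sg e * ind (good b e)| ≤
      ∑ e : Equiv.Perm α, ind (good b e) := by
  have h := u_bound b hb (Fintype.card α) hα
  unfold u at h
  rw [W_congr _ _ (Fintype.equivFin α), W_congr _ _ (Fintype.equivFin α), abs_div,
    Nat.abs_cast, ← mul_div_assoc] at h
  have hf : (0 : ℝ) < (Fintype.card α).factorial := by positivity
  rw [div_le_div_iff_of_pos_right hf] at h
  unfold W at h
  simp only [wt_one, wt_neg_one, one_mul, mul_assoc] at h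
  rw [← Finset.mul_sum, abs_mul] at h
  simpa using h

/-- `X` is the set of points on cycles of length divisible by `b` but not `2b`, and the other
points lie on cycles of length not divisible by `b`. -/
def q (b : ℕ) (X : Finset α) (σ : Equiv.Perm α) : Prop :=
  ∀ x, (x ∈ X → b ∣ minimalPeriod σ x ∧ ¬ 2 * b ∣ minimalPeriod σ x) ∧
    (x ∉ X → ¬ b ∣ minimalPeriod σ x)

/-- all cycle lengths divisible by `b` but not `2b` -/
def inner (b : ℕ) (σ : Equiv.Perm α) : Prop :=
  ∀ x, b ∣ minimalPeriod σ x ∧ ¬ 2 * b ∣ minimalPeriod σ x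

theorem per_left {p : α → Prop} [DecidablePred p] (ρ : Equiv.Perm {a // p a})
    (τ : Equiv.Perm {a // ¬ p a}) (x : {a // p a}) :
    minimalPeriod (Equiv.Perm.subtypeCongr ρ τ) (x : α) = minimalPeriod ρ x := by
  apply per_eq_of_iter Subtype.val_injective rfl
  intro k
  induction k with
  | zero => simp
  | succ k ih =>
    rw [iterate_succ_apply', ih, iterate_succ_apply',
      Equiv.Perm.subtypeCongr.left_apply_subtype]

theorem per_right {p : α → Prop} [DecidablePred p] (ρ : Equiv.Perm {a // p a})
    (τ : Equiv.Perm {a // ¬ p a}) (x : {a // ¬ p a}) :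
    minimalPeriod (Equiv.Perm.subtypeCongr ρ τ) (x : α) = minimalPeriod τ x := by
  apply per_eq_of_iter Subtype.val_injective rfl
  intro k
  induction k with
  | zero => simp
  | succ k ih =>
    rw [iterate_succ_apply', ih, iterate_succ_apply',
      Equiv.Perm.subtypeCongr.right_apply_subtype]

theorem q_congr (b : ℕ) (X : Finset α) (ρ : Equiv.Perm {a // a ∈ X})
    (τ : Equiv.Perm {a // ¬ a ∈ X}) :
    q b X (Equiv.Perm.subtypeCongr ρ τ) ↔ inner b ρ ∧ good b τ := by
  constructor
  · intro h
    refine ⟨fun x => ?_, fun x => ?_⟩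
    · rw [← per_left ρ τ]; exact (h x).1 x.2
    · rw [← per_right ρ τ]; exact (h x).2 x.2
  · rintro ⟨h1, h2⟩ x
    refine ⟨fun hx => ?_, fun hx => ?_⟩
    · rw [per_left ρ τ ⟨x, hx⟩]; exact h1 _
    · rw [per_right ρ τ ⟨x, hx⟩]; exact h2 _

theorem q_range (b : ℕ) (X : Finset α) (σ : Equiv.Perm α) (h : q b X σ) :
    ∃ z, Equiv.Perm.subtypeCongrHom (fun a => a ∈ X) z = σ := by
  have h0 : ∀ x, x ∈ X ↔ b ∣ minimalPeriod σ x := fun x =>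
    ⟨fun hx => ((h x).1 hx).1, fun hx => by by_contra hn; exact (h x).2 hn hx⟩
  have h1 : ∀ x, σ x ∈ X ↔ x ∈ X := by
    intro x
    rw [h0, h0, minimalPeriod_apply (σ.injective.mem_periodicPts x)]
  refine ⟨(σ.subtypePerm h1, σ.subtypePerm fun x => not_congr (h1 x)), ?_⟩
  ext x
  change Equiv.Perm.subtypeCongr _ _ x = σ x
  by_cases hx : x ∈ X
  · rw [Equiv.Perm.subtypeCongr.left_apply _ _ hx]; rfl
  · rw [Equiv.Perm.subtypeCongr.right_apply _ _ hx]; rfl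

theorem sum_q (b : ℕ) (X : Finset α) (F : Equiv.Perm α → ℝ) :
    ∑ σ, F σ * ind (q b X σ) = ∑ ρ : Equiv.Perm {a // a ∈ X}, ∑ τ : Equiv.Perm {a // ¬ a ∈ X},
      F (Equiv.Perm.subtypeCongr ρ τ) * (ind (inner b ρ) * ind (good b τ)) := by
  rw [← Fintype.sum_prod_type']
  symm
  apply Fintype.sum_of_injective (Equiv.Perm.subtypeCongrHom (fun a => a ∈ X))
    (Equiv.Perm.subtypeCongrHom_injective _)
  · intro σ hσ
    have : ¬ q b X σ := fun h => hσ (q_range b X σ h)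
    simp [ind, this]
  · rintro ⟨ρ, τ⟩
    change _ = F (Equiv.Perm.subtypeCongr ρ τ) * ind (q b X (Equiv.Perm.subtypeCongr ρ τ))
    rw [ind_congr (q_congr b X ρ τ), ind_and]

theorem q_bound (b : ℕ) (hb : 2 ≤ b) (X : Finset α) (hX : X.card + 2 ≤ Fintype.card α) :
    ((b : ℝ) - 1) * |∑ σ, sg σ * ind (q b X σ)| ≤ ∑ σ, ind (q b X σ) := by
  have hb' : (2 : ℝ) ≤ b := by exact_mod_cast hb
  have hc : 2 ≤ Fintype.card {a // ¬ a ∈ X} := by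
    rw [Fintype.card_subtype_compl, Fintype.card_coe]; omega
  have h1 : ∑ σ, sg σ * ind (q b X σ) =
      (∑ ρ : Equiv.Perm {a // a ∈ X}, sg ρ * ind (inner b ρ)) *
        ∑ τ : Equiv.Perm {a // ¬ a ∈ X}, sg τ * ind (good b τ) := by
    rw [sum_q, Finset.sum_mul_sum]
    refine Finset.sum_congr rfl fun ρ _ => Finset.sum_congr rfl fun τ _ => ?_
    have : sg (Equiv.Perm.subtypeCongr ρ τ) = sg ρ * sg τ := by
      unfold sg; rw [Equiv.Perm.sign_subtypeCongr]; push_cast; congr!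
    rw [this]; ring
  have h2 : ∑ σ, ind (q b X σ) =
      (∑ ρ : Equiv.Perm {a // a ∈ X}, ind (inner b ρ)) *
        ∑ τ : Equiv.Perm {a // ¬ a ∈ X}, ind (good b τ) := by
    have := sum_q b X (fun _ => 1)
    simp only [one_mul] at this
    rw [this, Finset.sum_mul_sum]
  rw [h1, h2, abs_mul, mul_left_comm]
  apply mul_le_mul _ (good_bound b hb hc)
  · apply mul_nonneg (by linarith) (abs_nonneg _)
  · exact Finset.sum_nonneg fun _ _ => ind_nonneg _
  · refine (Finset.abs_sum_le_sum_abs _ _).trans (Finset.sum_le_sum fun ρ _ => ?_)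
    rw [abs_mul, sg_abs, one_mul, abs_of_nonneg (ind_nonneg _)]

end

/-- admissible sizes -/
def J (b n : ℕ) (X : Finset (Fin n)) : Prop :=
  ∃ j : ℕ, 1 ≤ j ∧ (j : ℝ) ≤ 4 * Real.sqrt n / (3 * (b : ℝ)) ∧ X.card = j * b

theorem ubProp_iff (b n : ℕ) (σ : Equiv.Perm (Fin n)) :
    ind (ubProp b n σ) = ∑ X : Finset (Fin n), ind (J b n X) * ind (q b X σ) := by
  set X0 : Finset (Fin n) := Finset.univ.filter (fun x : Fin n =>
        b ∣ Function.minimalPeriod σ x ∧ ¬ (2 * b ∣ Function.minimalPeriod σ x)) with hX0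
  have hmem : ∀ x, x ∈ X0 ↔
      (b ∣ Function.minimalPeriod σ x ∧ ¬ (2 * b ∣ Function.minimalPeriod σ x)) := by
    intro x; simp [hX0]
  rw [Finset.sum_eq_single X0]
  · rw [← ind_and]
    apply ind_congr
    constructor
    · rintro ⟨j, h1, h2, h3, h4⟩
      refine ⟨⟨j, h1, h2, h3⟩, fun x => ⟨fun hx => (hmem x).1 hx, fun hx => ?_⟩⟩
      rw [hmem] at hx
      exact h4 x hx
    · rintro ⟨⟨j, h1, h2, h3⟩, h4⟩
      refine ⟨j, h1, h2, h3, fun x hx => ?_⟩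
      rw [← hmem] at hx
      exact (h4 x).2 hx
  · intro X _ hX
    have : ¬ q b X σ := by
      intro h
      apply hX
      ext x
      rw [hmem]
      constructor
      · exact (h x).1
      · intro h1
        by_contra h2
        exact (h x).2 h2 h1.1
    simp [ind, this]
  · simp

theorem J_card (b n : ℕ) (hb : 3 ≤ b) (X : Finset (Fin n)) (h : J b n X) : X.card + 2 ≤ n := by
  obtain ⟨j, h1, h2, h3⟩ := h
  have hb' : (3 : ℝ) ≤ b := by exact_mod_cast hb
  have hj : (1 : ℝ) ≤ j := by exact_mod_cast h1
  rw [le_div_iff₀ (by positivity)] at h2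
  have h4 : ((X.card + 2 : ℕ) : ℝ) ≤ n := by
    rw [h3]; push_cast
    have hs := Real.sq_sqrt (Nat.cast_nonneg n : (0 : ℝ) ≤ n)
    have h5 : (3 : ℝ) ≤ j * b := by nlinarith
    have h6 : 9 / 4 ≤ Real.sqrt n := by linarith
    nlinarith
  exact_mod_cast h4

theorem ub_bound (b n : ℕ) (hb : 3 ≤ b) :
    ((b : ℝ) - 1) * |∑ σ, sg σ * ind (ubProp b n σ)| ≤ ∑ σ, ind (ubProp b n σ) := by
  have hb' : (3 : ℝ) ≤ b := by exact_mod_cast hb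
  simp only [ubProp_iff, Finset.mul_sum]
  rw [Finset.sum_comm, Finset.sum_comm (f := fun σ X => ind (J b n X) * ind (q b X σ))]
  calc _ ≤ ((b : ℝ) - 1) * ∑ X : Finset (Fin n),
        |∑ σ, sg σ * (ind (J b n X) * ind (q b X σ))| :=
        mul_le_mul_of_nonneg_left (Finset.abs_sum_le_sum_abs _ _) (by linarith)
    _ ≤ _ := by
      rw [Finset.mul_sum]
      refine Finset.sum_le_sum fun X _ => ?_
      by_cases hJ : J b n X
      · have := q_bound b (by omega) X (by simpa using J_card b n hb X hJ)
        have h1 : ind (J b n X) = 1 := by simp [ind, hJ]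
        simpa [h1] using this
      · have h1 : ind (J b n X) = 0 := by simp [ind, hJ]
        simp [h1]

theorem card_eq_sum_ind {β : Type} [Fintype β] (p : β → Prop) [DecidablePred p] :
    ((Finset.univ.filter p).card : ℝ) = ∑ x, ind (p x) := by
  rw [Finset.card_filter]
  push_cast
  refine Finset.sum_congr rfl fun x _ => ?_
  unfold ind
  by_cases h : p x <;> simp [h]

theorem alt_ind (n : ℕ) (σ : Equiv.Perm (Fin n)) (p : Prop) :
    ind (σ ∈ alternatingGroup (Fin n) ∧ p) = (ind p + sg σ * ind p) / 2 := by
  rw [ind_and, ind_congr Equiv.Perm.mem_alternatingGroup]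
  unfold sg
  rcases Int.units_eq_one_or (Equiv.Perm.sign σ) with h | h
  · rw [h]; simp [ind]
  · have h1 : ¬ ((-1 : ℤˣ) = 1) := by decide
    rw [h]; by_cases hp : p <;> simp [ind, h1, hp]

end UB

/-- For all `b ≥ 2` and `n ≥ 1`, `ũ_b(n) ≥ (1 − 1/(b−1)) · u_b(n)`. -/
theorem utb_ge_ub (b n : ℕ) (hb : 2 ≤ b) (hn : 1 ≤ n) :
    (1 - 1 / ((b : ℝ) - 1)) * ub b n ≤ utb b n := by
  have hnn : 0 ≤ utb b n := by unfold utb; positivity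
  rcases Nat.lt_or_ge b 3 with h2 | hb3
  · have : b = 2 := by omega
    subst this
    norm_num
    exact hnn
  have hb' : (3 : ℝ) ≤ b := by exact_mod_cast hb3
  rcases Nat.lt_or_ge n 2 with h1 | hn2
  · have h0 : ub b n = 0 := by
      unfold ub
      rw [UB.card_eq_sum_ind]
      simp only [UB.ubProp_iff]
      rw [Finset.sum_eq_zero, zero_div]
      intro σ _
      apply Finset.sum_eq_zero
      intro X _
      have : ¬ UB.J b n X := by
        intro hJ
        have := UB.J_card b n hb3 X hJ
        omega
      simp [UB.ind, this]
    rw [h0, mul_zero]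
    exact hnn
  · have hB := UB.ub_bound b n hb3
    unfold ub utb
    have : Nontrivial (Fin n) := Fin.nontrivial_iff_two_le.mpr hn2
    have hcard : (Fintype.card (alternatingGroup (Fin n)) : ℝ) = (n.factorial : ℝ) / 2 := by
      have h := two_mul_card_alternatingGroup (α := Fin n)
      rw [Fintype.card_perm, Fintype.card_fin] at h
      rw [← h]; push_cast; ring
    rw [hcard, UB.card_eq_sum_ind, UB.card_eq_sum_ind]
    simp only [UB.alt_ind]
    rw [← Finset.sum_div, Finset.sum_add_distrib]
    set S := ∑ σ, UB.sg σ * UB.ind (ubProp b n σ)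
    set N := ∑ σ, UB.ind (ubProp b n σ)
    have hf : (0 : ℝ) < n.factorial := by positivity
    rw [div_div_div_cancel_right₀ (by norm_num), ← mul_div_assoc, div_le_div_iff_of_pos_right hf]
    have hS : -S ≤ N / ((b : ℝ) - 1) := by
      rw [le_div_iff₀ (by linarith)]
      have := neg_abs_le S
      nlinarith
    have : (1 - 1 / ((b : ℝ) - 1)) * N = N - N / ((b : ℝ) - 1) := by ring
    linarith
end

section
/- Define f(k) := (1 − 2k/((9/4)k² − 2k + 1))^{2k} for real k. Then f is increasing on the interval k ≥ 2; that is, f(k) ≤ f(k') whenever 2 ≤ k ≤ k'. -/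
lemma log_le_half_aux {y : ℝ} (hy : 1 ≤ y) : Real.log y ≤ (y - y⁻¹) / 2 := by
  rw [← Real.sinh_log (by linarith)]
  exact Real.self_le_sinh_iff.2 (Real.log_nonneg hy)

lemma N_pos_aux {k : ℝ} (hk : 2 ≤ k) : 0 < 9 * k ^ 2 - 16 * k + 4 := by nlinarith
lemma D_pos_aux {k : ℝ} (hk : 2 ≤ k) : 0 < 9 * k ^ 2 - 8 * k + 4 := by nlinarith

lemma hasDeriv_aux {k : ℝ} (hk : 2 ≤ k) :
    HasDerivAt (fun k : ℝ => k * (Real.log (9 * k ^ 2 - 16 * k + 4) - Real.log (9 * k ^ 2 - 8 * k + 4)))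
      (1 * (Real.log (9 * k ^ 2 - 16 * k + 4) - Real.log (9 * k ^ 2 - 8 * k + 4)) +
        k * ((18 * k - 16) / (9 * k ^ 2 - 16 * k + 4) - (18 * k - 8) / (9 * k ^ 2 - 8 * k + 4))) k := by
  have h (c : ℝ) : HasDerivAt (fun k : ℝ => 9 * k ^ 2 - c * k + 4) (18 * k - c) k := by
    have := (((hasDerivAt_id' k).pow 2).const_mul 9).sub ((hasDerivAt_id' k).const_mul c)
    exact (this.add_const 4).congr_deriv (by norm_num; ring)
  exact (hasDerivAt_id' k).mul (((h 16).log (N_pos_aux hk).ne').sub ((h 8).log (D_pos_aux hk).ne'))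

lemma deriv_nonneg_aux {k : ℝ} (hk : 2 ≤ k) :
    0 ≤ 1 * (Real.log (9 * k ^ 2 - 16 * k + 4) - Real.log (9 * k ^ 2 - 8 * k + 4)) +
        k * ((18 * k - 16) / (9 * k ^ 2 - 16 * k + 4) - (18 * k - 8) / (9 * k ^ 2 - 8 * k + 4)) := by
  have hN := N_pos_aux hk
  have hD := D_pos_aux hk
  have h1 := log_le_half_aux (y := (9 * k ^ 2 - 8 * k + 4) / (9 * k ^ 2 - 16 * k + 4))
    (by rw [le_div_iff₀ hN]; linarith)
  rw [Real.log_div hD.ne' hN.ne'] at h1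
  have h2 : k * ((18 * k - 16) / (9 * k ^ 2 - 16 * k + 4) - (18 * k - 8) / (9 * k ^ 2 - 8 * k + 4))
      - ((9 * k ^ 2 - 8 * k + 4) / (9 * k ^ 2 - 16 * k + 4) -
        ((9 * k ^ 2 - 8 * k + 4) / (9 * k ^ 2 - 16 * k + 4))⁻¹) / 2
      = 8 * k * (12 * k - 8) / ((9 * k ^ 2 - 16 * k + 4) * (9 * k ^ 2 - 8 * k + 4)) := by
    rw [inv_div]
    generalize hn : 9 * k ^ 2 - 16 * k + 4 = n at *
    generalize hd : 9 * k ^ 2 - 8 * k + 4 = d at *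
    field_simp
    subst hn hd
    ring
  have h3 : 0 ≤ 8 * k * (12 * k - 8) / ((9 * k ^ 2 - 16 * k + 4) * (9 * k ^ 2 - 8 * k + 4)) :=
    div_nonneg (mul_nonneg (by linarith) (by linarith)) (mul_pos hN hD).le
  linarith

lemma mono_aux : MonotoneOn (fun k : ℝ => k * (Real.log (9 * k ^ 2 - 16 * k + 4) -
    Real.log (9 * k ^ 2 - 8 * k + 4))) (Set.Ici 2) := by
  refine monotoneOn_of_deriv_nonneg (convex_Ici 2)
    (fun k hk => (hasDeriv_aux hk).continuousAt.continuousWithinAt) ?_ ?_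
  · intro k hk
    exact (hasDeriv_aux (interior_subset hk)).differentiableAt.differentiableWithinAt
  · intro k hk
    rw [(hasDeriv_aux (interior_subset hk)).deriv]
    exact deriv_nonneg_aux (interior_subset hk)

lemma rewrite_aux {k : ℝ} (hk : 2 ≤ k) :
    (1 - 2 * k / ((9 / 4) * k ^ 2 - 2 * k + 1)) ^ (2 * k) =
    Real.exp (2 * (k * (Real.log (9 * k ^ 2 - 16 * k + 4) - Real.log (9 * k ^ 2 - 8 * k + 4)))) := by
  have hN := N_pos_aux hk
  have hD := D_pos_aux hk
  have h : 1 - 2 * k / ((9 / 4) * k ^ 2 - 2 * k + 1) =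
      (9 * k ^ 2 - 16 * k + 4) / (9 * k ^ 2 - 8 * k + 4) := by
    have e : (9 / 4) * k ^ 2 - 2 * k + 1 = (9 * k ^ 2 - 8 * k + 4) / 4 := by ring
    rw [e, eq_div_iff hD.ne', sub_mul, div_div_eq_mul_div, div_mul_cancel₀ _ hD.ne']
    ring
  rw [h, Real.rpow_def_of_pos (div_pos hN hD), Real.log_div hN.ne' hD.ne']
  congr 1
  ring

/-- The function `f(k) = (1 − 2k/((9/4)k² − 2k + 1))^{2k}` is increasing
on `k ≥ 2`. -/
theorem f_increasing (f : ℝ → ℝ)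
    (hf : ∀ k : ℝ, f k = (1 - 2 * k / ((9 / 4) * k ^ 2 - 2 * k + 1)) ^ (2 * k)) :
    ∀ k k' : ℝ, 2 ≤ k → k ≤ k' → f k ≤ f k' := by
  intro k k' hk hkk
  rw [hf, hf, rewrite_aux hk, rewrite_aux (hk.trans hkk)]
  have := mono_aux (Set.mem_Ici.2 hk) (Set.mem_Ici.2 (hk.trans hkk)) hkk
  exact Real.exp_le_exp.2 (mul_le_mul_of_nonneg_left this (by norm_num))
end
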